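/- arXiv:2409.19997 — 2 statements merged into one kernel-verified Lean document; each statement's English description precedes it below -/
import Mathlib

section
/- Under the same hypotheses (f C³, symmetric, f'>0 on [0,L/2), f''≤0, f''(L/2)<0), the variance of τₙ satisfies Var(τₙ) = O(ln n / n²) as n → ∞, where Var(τₙ) = 2∫₀ᴸ (f^{n−1}(t)/Iₙ²(t)) ∫₀ᵗ (Iₙ²(s)/f^{n−1}(s)) (u'ₙ,₁(s))² ds dt. -/
/-!
A concave profile `f` is log-concave, and a nondegenerate maximum at `a` makes `f` decay away from
`a` at least like a Gaussian of some rate `κ > 0`; the power `f ^ (n - 1)` then decays like a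
Gaussian of rate `(n - 1) κ`. For a log-concave weight `w` the Mills ratio `(∫₀ᵗ w) / w t` increases
with `t`, which bounds the slope `-u'` of the first moment by the Mills ratio before the peak, and
by a decaying multiple of the Mills ratio at the peak plus `∫ₐᵗ w t / w x dx` after it. Gaussian
decay of rate `κ` turns this into `-u' ≤ 9 / (√κ + κ |t - a|)`. The variance is at most
`2 (sup u'²) ∫ (-u')`, where the supremum is `O(1 / κ)` and the integral is `O(log κ / κ)`. With a
rate proportional to `n`, this is `O(log n / n²)`.
-/

open MeasureTheory ProbabilityTheory Filter Set Asymptotics Topology intervalIntegral Real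

noncomputable section

section Diffusion

variable (w : ℝ → ℝ) (L : ℝ)

/-- The mass `∫₀ʳ w` of a weight `w`; for `w = f ^ (n - 1)` it is the paper's `Iₙ(r)`. -/
def mass (r : ℝ) : ℝ := ∫ s in (0 : ℝ)..r, w s

/-- The scale density `w / (∫₀ w)²` of the radial diffusion with weight `w`. -/
def scaleDensity (t : ℝ) : ℝ := w t / mass w t ^ 2

/-- The speed density `(∫₀ w)² / w` of the radial diffusion with weight `w`. Its value at a zero
of `w` is `0` by the convention for division. -/
def speedDensity (s : ℝ) : ℝ := mass w s ^ 2 / w s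

/-- The Mills ratio `(∫₀ᵗ w) / w t` of a weight, with value `0` at a zero of `w`. -/
def millsRatio (t : ℝ) : ℝ := mass w t / w t

/-- The derivative, up to sign, of the first moment `u_{n,1}` of the hitting time. -/
def momentSlope (t : ℝ) : ℝ := scaleDensity w t * ∫ s in (0 : ℝ)..t, speedDensity w s

/-- The first moment of the time to hit `L` from `r`; for `w = f ^ (n - 1)` it is the paper's
`u_{n,1}(r)`. -/
def firstMoment (r : ℝ) : ℝ := ∫ t in r..L, momentSlope w t

/-- The explicit formula for the variance of the hitting time of `L`. -/
def varianceIntegral : ℝ :=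
  2 * ∫ t in (0 : ℝ)..L, scaleDensity w t *
    ∫ s in (0 : ℝ)..t, speedDensity w s * deriv (firstMoment w L) s ^ 2

end Diffusion

theorem exp_neg_half_mul_le {κ : ℝ} (hκ : 0 ≤ κ) (r y : ℝ) :
    exp (-(κ / 2 * (y * (y + r)))) ≤ 3 / 2 * exp (-((√κ + κ * r) / 2 * y)) := by
  have hsq : √κ ^ 2 = κ := sq_sqrt hκ
  have hexp : exp (1 / 8) ≤ 3 / 2 :=
    (exp_bound_div_one_sub_of_interval (by norm_num) (by norm_num)).trans (by norm_num)
  calc exp (-(κ / 2 * (y * (y + r))))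
      ≤ exp (1 / 8 + -((√κ + κ * r) / 2 * y)) := by
        gcongr
        linear_combination 1 / 2 * sq_nonneg (√κ * y - 1 / 2) + y ^ 2 / 2 * hsq
    _ ≤ 3 / 2 * exp (-((√κ + κ * r) / 2 * y)) := by rw [exp_add]; gcongr

theorem integral_exp_neg_mul_sub_le {b : ℝ} (hb : 0 < b) (p t : ℝ) :
    ∫ x in p..t, exp (-(b * (t - x))) ≤ 1 / b := by
  have hderiv (x : ℝ) :
      HasDerivAt (fun x => exp (-(b * (t - x))) / b) (exp (-(b * (t - x)))) x := by
    have := ((((hasDerivAt_id x).const_sub t).const_mul b).neg.exp).div_const b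
    exact this.congr_deriv (by field_simp; simp)
  rw [integral_eq_sub_of_hasDerivAt (fun x _ => hderiv x)
    (Continuous.intervalIntegrable (by fun_prop) _ _), sub_self, mul_zero, neg_zero, exp_zero]
  have : 0 ≤ exp (-(b * (t - p))) / b := by positivity
  linarith

theorem integral_exp_neg_half_mul_le {κ r p t : ℝ} (hκ : 0 < κ) (hr : 0 ≤ r) (hpt : p ≤ t) :
    ∫ x in p..t, exp (-(κ / 2 * ((t - x) * (t - x + r)))) ≤ 3 / (√κ + κ * r) := by
  have hb : 0 < √κ + κ * r := by positivity
  calc ∫ x in p..t, exp (-(κ / 2 * ((t - x) * (t - x + r))))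
      ≤ ∫ x in p..t, 3 / 2 * exp (-((√κ + κ * r) / 2 * (t - x))) :=
        integral_mono_on hpt (Continuous.intervalIntegrable (by fun_prop) _ _)
          (Continuous.intervalIntegrable (by fun_prop) _ _)
          fun x _ => exp_neg_half_mul_le hκ.le r (t - x)
    _ = 3 / 2 * ∫ x in p..t, exp (-((√κ + κ * r) / 2 * (t - x))) :=
        intervalIntegral.integral_const_mul _ _
    _ ≤ 3 / 2 * (1 / ((√κ + κ * r) / 2)) := by
        gcongr
        exact integral_exp_neg_mul_sub_le (half_pos hb) p t
    _ = 3 / (√κ + κ * r) := by field_simp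

theorem exp_neg_mul_sq_div_sqrt_le {κ r : ℝ} (hκ : 0 < κ) (hr : 0 ≤ r) :
    exp (-(κ * r ^ 2)) / √κ ≤ 2 / (√κ + κ * r) := by
  have hs : 0 < √κ := sqrt_pos.2 hκ
  have hsq : κ = √κ ^ 2 := (sq_sqrt hκ.le).symm
  rw [exp_neg, div_le_div_iff₀ hs (by positivity), inv_mul_le_iff₀ (exp_pos _)]
  calc √κ + κ * r ≤ 2 * √κ * (κ * r ^ 2 + 1) := by
        rw [hsq, sqrt_sq hs.le]
        nlinarith [sq_nonneg (√κ * r - 1 / 2), sq_nonneg (√κ * r)]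
    _ ≤ 2 * √κ * exp (κ * r ^ 2) := by gcongr; exact add_one_le_exp _
    _ = exp (κ * r ^ 2) * (2 * √κ) := mul_comm _ _

theorem integral_inv_sqrt_add_mul {κ T : ℝ} (hκ : 0 < κ) (hT : 0 ≤ T) :
    ∫ r in (0 : ℝ)..T, (√κ + κ * r)⁻¹ = log (1 + √κ * T) / κ := by
  have hs : 0 < √κ := sqrt_pos.2 hκ
  rw [intervalIntegral.integral_comp_add_mul (fun x => x⁻¹) hκ.ne',
    integral_inv_of_pos (by positivity) (by positivity), mul_zero, add_zero, smul_eq_mul,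
    inv_mul_eq_div, add_div, div_self hs.ne']
  congr 3
  nth_rewrite 1 [← sq_sqrt hκ.le]
  field_simp

theorem integral_inv_sqrt_add_mul_abs_le {κ L a : ℝ} (hκ : 0 < κ) (ha : a ∈ Icc 0 L) :
    ∫ t in (0 : ℝ)..L, (√κ + κ * |t - a|)⁻¹ ≤ 2 * log (1 + √κ * L) / κ := by
  have hint (p q : ℝ) : IntervalIntegrable (fun t => (√κ + κ * |t - a|)⁻¹) volume p q :=
    (Continuous.inv₀ (by fun_prop) fun t => by positivity).intervalIntegrable p q
  have hleft : ∫ t in (0 : ℝ)..a, (√κ + κ * |t - a|)⁻¹ = log (1 + √κ * a) / κ := by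
    rw [← integral_inv_sqrt_add_mul hκ ha.1]
    have hsub := intervalIntegral.integral_comp_sub_left (a := 0) (b := a)
      (fun r => (√κ + κ * r)⁻¹) a
    rw [sub_self, sub_zero] at hsub
    rw [← hsub]
    refine integral_congr fun t ht => ?_
    rw [uIcc_of_le ha.1] at ht
    simp only [abs_of_nonpos (sub_nonpos.2 ht.2), neg_sub]
  have hright : ∫ t in a..L, (√κ + κ * |t - a|)⁻¹ = log (1 + √κ * (L - a)) / κ := by
    rw [← integral_inv_sqrt_add_mul hκ (sub_nonneg.2 ha.2)]
    have hsub := intervalIntegral.integral_comp_sub_right (a := a) (b := L)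
      (fun r => (√κ + κ * r)⁻¹) a
    rw [sub_self] at hsub
    rw [← hsub]
    refine integral_congr fun t ht => ?_
    rw [uIcc_of_le ha.2] at ht
    simp only [abs_of_nonneg (sub_nonneg.2 ht.1)]
  have hlog : ∀ T ∈ Icc 0 L, log (1 + √κ * T) ≤ log (1 + √κ * L) := fun T hT => by
    have := hT.1
    have := hT.2
    gcongr
  rw [← integral_add_adjacent_intervals (hint 0 a) (hint a L), hleft, hright, ← add_div]
  gcongr
  linarith [hlog a ha, hlog (L - a) ⟨sub_nonneg.2 ha.2, sub_le_self L ha.1⟩]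

theorem concaveOn_log_comp {E : Type*} [AddCommMonoid E] [SMul ℝ E] {s : Set E} {f : E → ℝ}
    (hf : ConcaveOn ℝ s f) (hpos : ∀ x ∈ s, 0 < f x) : ConcaveOn ℝ s fun x => log (f x) := by
  refine ⟨hf.1, fun x hx y hy p q hp hq hpq => ?_⟩
  have hlog := strictConcaveOn_log_Ioi.concaveOn.2 (hpos x hx) (hpos y hy) hp hq hpq
  have hcomb : p • f x + q • f y ∈ Ioi 0 := convex_Ioi (0 : ℝ) (hpos x hx) (hpos y hy) hp hq hpq
  exact hlog.trans (log_le_log hcomb (hf.2 hx hy hp hq hpq))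

theorem add_le_add_of_concaveOn {s : Set ℝ} {g : ℝ → ℝ} (hg : ConcaveOn ℝ s g) {x y d : ℝ}
    (hx : x ∈ s) (hyd : y + d ∈ s) (hxy : x ≤ y) (hd : 0 ≤ d) :
    g x + g (y + d) ≤ g (x + d) + g y := by
  rcases hd.eq_or_lt with rfl | hd
  · simp only [add_zero, le_refl]
  have hlen : 0 < y + d - x := by linarith
  have hp : 0 ≤ (y - x) / (y + d - x) := div_nonneg (by linarith) hlen.le
  have hq : 0 ≤ d / (y + d - x) := by positivity
  have hleft := hg.2 hx hyd hp hq (by field_simp; ring)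
  have hright := hg.2 hx hyd hq hp (by field_simp; ring)
  have hx' : (y - x) / (y + d - x) * x + d / (y + d - x) * (y + d) = x + d := by field_simp; ring
  have hy' : d / (y + d - x) * x + (y - x) / (y + d - x) * (y + d) = y := by field_simp; ring
  have hpq : (y - x) / (y + d - x) + d / (y + d - x) = 1 := by field_simp; ring
  simp only [smul_eq_mul, hx', hy'] at hleft hright
  linear_combination hleft + hright - (g x + g (y + d)) * hpq

theorem le_of_concaveOn_of_deriv_eq_zero {s : Set ℝ} {f : ℝ → ℝ} {a x : ℝ}
    (hf : ConcaveOn ℝ s f) (ha : a ∈ s) (hd : DifferentiableAt ℝ f a) (hfa : deriv f a = 0)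
    (hx : x ∈ s) : f x ≤ f a := by
  have hderiv : HasDerivAt f 0 a := hfa ▸ hd.hasDerivAt
  rcases lt_trichotomy x a with hxa | rfl | hax
  · have := hf.le_slope_of_hasDerivAt hx ha hxa hderiv
    rw [slope_def_field, le_div_iff₀ (sub_pos.2 hxa)] at this
    linarith
  · exact le_rfl
  · have := hf.slope_le_of_hasDerivAt ha hx hax hderiv
    rw [slope_def_field, div_le_iff₀ (sub_pos.2 hax)] at this
    linarith

theorem eventually_mul_sub_le_of_deriv_lt {g : ℝ → ℝ} {a k : ℝ} (hga : g a = 0)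
    (hd : DifferentiableAt ℝ g a) (hk : deriv g a < k) :
    ∀ᶠ x in 𝓝 a, g x * (x - a) ≤ k * (x - a) ^ 2 := by
  have hslope := (hasDerivAt_iff_tendsto_slope.1 hd.hasDerivAt).eventually_lt_const hk
  filter_upwards [eventually_nhdsWithin_iff.1 hslope] with x hx
  rcases eq_or_ne x a with rfl | hxa
  · simp
  have hxa' : x - a ≠ 0 := sub_ne_zero.2 hxa
  calc g x * (x - a) = slope g a x * (x - a) ^ 2 := by
        rw [slope_def_field, hga]
        field_simp
        ring
    _ ≤ k * (x - a) ^ 2 := by gcongr; exact (hx hxa).le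

-- The derivative controls `g` near `a`; a far point `x` is compared, by monotonicity, with the
-- point `z` of the segment from `a` to `x` which the contraction by `θ` brings close to `a`.
theorem exists_mul_sub_le_neg_mul_sq {g : ℝ → ℝ} {L a : ℝ} (ha : a ∈ Ioo 0 L)
    (hg : AntitoneOn g (Ioo 0 L)) (hga : g a = 0) (hg' : deriv g a < 0) :
    ∃ c > 0, ∀ x ∈ Ioo 0 L, g x * (x - a) ≤ -(c * (x - a) ^ 2) := by
  have hd : DifferentiableAt ℝ g a := differentiableAt_of_deriv_ne_zero hg'.ne
  obtain ⟨ε, hε, hnear⟩ := Metric.eventually_nhds_iff.1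
    (eventually_mul_sub_le_of_deriv_lt hga hd (k := deriv g a / 2) (by linarith))
  have hL : 0 < L := ha.1.trans ha.2
  set θ := ε / (L + ε) with hθ
  have hθ0 : 0 < θ := by positivity
  have hθ1 : θ < 1 := (div_lt_one (by positivity)).2 (by linarith)
  refine ⟨-(deriv g a / 2) * θ, mul_pos (by linarith) hθ0, fun x hx => ?_⟩
  set z := a + θ * (x - a) with hz
  have hza : z - a = θ * (x - a) := by rw [hz]; ring
  have hzmem : z ∈ Ioo 0 L := (convex_Ioo 0 L).add_smul_sub_mem ha hx ⟨hθ0.le, hθ1.le⟩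
  have hxa : |x - a| < L := abs_sub_lt_iff.2 ⟨by linarith [hx.2, ha.1], by linarith [hx.1, ha.2]⟩
  have hzε : dist z a < ε := by
    rw [Real.dist_eq, hza, abs_mul, abs_of_pos hθ0]
    calc θ * |x - a| ≤ θ * L := by gcongr
      _ < ε := by rw [hθ, div_mul_eq_mul_div, div_lt_iff₀ (by positivity)]; nlinarith
  have hmono : g x * (x - a) ≤ g z * (x - a) := by
    rcases le_total x a with hxa | hax
    · exact mul_le_mul_of_nonpos_right (hg hx hzmem (by nlinarith)) (by linarith)
    · exact mul_le_mul_of_nonneg_right (hg hzmem hx (by nlinarith)) (by linarith)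
  have hscale : g z * (x - a) ≤ deriv g a / 2 * θ * (x - a) ^ 2 := by
    refine le_of_mul_le_mul_left ?_ hθ0
    have := hnear hzε
    rw [hza] at this
    linarith
  linarith

/-- A log-concave weight on `(0, L)`; it may vanish at the endpoints. -/
structure IsLogConcaveWeight (w : ℝ → ℝ) (L : ℝ) : Prop where
  length_pos : 0 < L
  continuous : Continuous w
  pos : ∀ x ∈ Ioo 0 L, 0 < w x
  concaveOn_log : ConcaveOn ℝ (Ioo 0 L) fun x => log (w x)

theorem hasDerivAt_mass {w : ℝ → ℝ} (hw : Continuous w) (t : ℝ) :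
    HasDerivAt (mass w) (w t) t :=
  hw.integral_hasStrictDerivAt 0 t |>.hasDerivAt

theorem continuous_mass {w : ℝ → ℝ} (hw : Continuous w) : Continuous (mass w) :=
  continuous_iff_continuousAt.2 fun t => (hasDerivAt_mass hw t).continuousAt

theorem mass_sub_mass {w : ℝ → ℝ} (hw : Continuous w) (s t : ℝ) :
    mass w t - mass w s = ∫ x in s..t, w x :=
  integral_interval_sub_left (hw.intervalIntegrable _ _) (hw.intervalIntegrable _ _)

theorem mass_zero (w : ℝ → ℝ) : mass w 0 = 0 := integral_same

theorem speedDensity_eq_mass_mul_millsRatio (w : ℝ → ℝ) :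
    speedDensity w = mass w * millsRatio w := by
  funext s
  rw [speedDensity, sq, mul_div_assoc, Pi.mul_apply, millsRatio]

namespace IsLogConcaveWeight

variable {w : ℝ → ℝ} {L : ℝ}

theorem nonneg (h : IsLogConcaveWeight w L) {x : ℝ} (hx : x ∈ Icc 0 L) : 0 ≤ w x := by
  rw [← closure_Ioo h.length_pos.ne] at hx
  exact closure_minimal (fun y hy => (h.pos y hy).le) (isClosed_Ici.preimage h.continuous) hx

theorem mul_add_le (h : IsLogConcaveWeight w L) {x y d : ℝ} (hx : 0 < x) (hxy : x ≤ y)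
    (hd : 0 ≤ d) (hyd : y + d < L) : w x * w (y + d) ≤ w (x + d) * w y := by
  have hlog := add_le_add_of_concaveOn h.concaveOn_log (x := x) (y := y) (d := d)
    ⟨hx, by linarith⟩ ⟨by linarith, hyd⟩ hxy hd
  have hwx := h.pos x ⟨hx, by linarith⟩
  have hwy := h.pos y ⟨by linarith, by linarith⟩
  have hwxd := h.pos (x + d) ⟨by linarith, by linarith⟩
  have hwyd := h.pos (y + d) ⟨by linarith, hyd⟩
  rwa [← log_mul hwx.ne' hwyd.ne', ← log_mul hwxd.ne' hwy.ne',
    log_le_log_iff (mul_pos hwx hwyd) (mul_pos hwxd hwy)] at hlog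

theorem monotoneOn_mass (h : IsLogConcaveWeight w L) : MonotoneOn (mass w) (Icc 0 L) := by
  intro s hs t ht hst
  rw [← sub_nonneg, mass_sub_mass h.continuous]
  exact integral_nonneg hst fun x hx => h.nonneg ⟨hs.1.trans hx.1, hx.2.trans ht.2⟩

theorem mass_nonneg (h : IsLogConcaveWeight w L) {t : ℝ} (ht : t ∈ Icc 0 L) : 0 ≤ mass w t :=
  mass_zero w ▸ h.monotoneOn_mass ⟨le_rfl, h.length_pos.le⟩ ht ht.1

theorem mass_pos (h : IsLogConcaveWeight w L) {t : ℝ} (ht : t ∈ Ioo 0 L) : 0 < mass w t :=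
  intervalIntegral_pos_of_pos_on (h.continuous.intervalIntegrable _ _)
    (fun x hx => h.pos x ⟨hx.1, hx.2.trans ht.2⟩) ht.1

theorem scaleDensity_nonneg (h : IsLogConcaveWeight w L) {t : ℝ} (ht : t ∈ Icc 0 L) :
    0 ≤ scaleDensity w t :=
  div_nonneg (h.nonneg ht) (sq_nonneg _)

theorem speedDensity_nonneg (h : IsLogConcaveWeight w L) {t : ℝ} (ht : t ∈ Icc 0 L) :
    0 ≤ speedDensity w t :=
  div_nonneg (sq_nonneg _) (h.nonneg ht)

theorem millsRatio_nonneg (h : IsLogConcaveWeight w L) {t : ℝ} (ht : t ∈ Icc 0 L) :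
    0 ≤ millsRatio w t :=
  div_nonneg (h.mass_nonneg ht) (h.nonneg ht)

theorem momentSlope_nonneg (h : IsLogConcaveWeight w L) {t : ℝ} (ht : t ∈ Icc 0 L) :
    0 ≤ momentSlope w t :=
  mul_nonneg (h.scaleDensity_nonneg ht) <|
    integral_nonneg ht.1 fun _ hs => h.speedDensity_nonneg ⟨hs.1, hs.2.trans ht.2⟩

theorem varianceIntegral_nonneg (h : IsLogConcaveWeight w L) : 0 ≤ varianceIntegral w L :=
  mul_nonneg zero_le_two <| integral_nonneg h.length_pos.le fun _ ht =>
    mul_nonneg (h.scaleDensity_nonneg ht) <| integral_nonneg ht.1 fun _ hs =>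
      mul_nonneg (h.speedDensity_nonneg ⟨hs.1, hs.2.trans ht.2⟩) (sq_nonneg _)

-- Writing the left-hand side as `∫ x in 0..s, w x * w t`, log-concavity moves the shift `t - s`
-- from `w t` to `w x`.
theorem mass_mul_le (h : IsLogConcaveWeight w L) {s t : ℝ} (hs : 0 < s) (hst : s ≤ t)
    (ht : t < L) : mass w s * w t ≤ mass w t * w s := by
  have hd : 0 ≤ t - s := sub_nonneg.2 hst
  have hw := h.continuous
  calc mass w s * w t = ∫ x in (0 : ℝ)..s, w x * w t :=
        (intervalIntegral.integral_mul_const _ _).symm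
    _ ≤ ∫ x in (0 : ℝ)..s, w (x + (t - s)) * w s := by
        refine integral_mono_on_of_le_Ioo hs.le (Continuous.intervalIntegrable (by fun_prop) _ _)
          (Continuous.intervalIntegrable (by fun_prop) _ _) fun x hx => ?_
        simpa only [add_sub_cancel] using h.mul_add_le hx.1 hx.2.le hd (by linarith)
    _ = (mass w t - mass w (t - s)) * w s := by
        rw [intervalIntegral.integral_mul_const, intervalIntegral.integral_comp_add_right, zero_add,
          add_sub_cancel, mass_sub_mass hw]
    _ ≤ mass w t * w s := by
        have := h.mass_nonneg ⟨hd, by linarith⟩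
        have := h.nonneg ⟨hs.le, by linarith⟩
        gcongr
        linarith

theorem monotoneOn_millsRatio (h : IsLogConcaveWeight w L) :
    MonotoneOn (millsRatio w) (Ico 0 L) := by
  intro s hs t ht hst
  rcases hs.1.eq_or_lt with rfl | hs0
  · rw [millsRatio, mass_zero, zero_div]
    exact h.millsRatio_nonneg (Ico_subset_Icc_self ht)
  · rw [millsRatio, millsRatio, div_le_div_iff₀ (h.pos s ⟨hs0, hs.2⟩)
      (h.pos t ⟨hs0.trans_le hst, ht.2⟩)]
    exact h.mass_mul_le hs0 hst ht.2

theorem speedDensity_le (h : IsLogConcaveWeight w L) {s t : ℝ} (hs : s ∈ Ioo 0 t) (ht : t < L) :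
    speedDensity w s ≤ millsRatio w t ^ 2 * w s := by
  have hs' : s ∈ Ioo 0 L := ⟨hs.1, hs.2.trans ht⟩
  have hws := h.pos s hs'
  calc speedDensity w s = millsRatio w s ^ 2 * w s := by
        rw [speedDensity, millsRatio]
        field_simp
    _ ≤ millsRatio w t ^ 2 * w s := by
        gcongr
        · exact h.millsRatio_nonneg (Ioo_subset_Icc_self hs')
        · exact h.monotoneOn_millsRatio (Ioo_subset_Ico_self hs')
            ⟨hs.1.le.trans hs.2.le, ht⟩ hs.2.le

theorem intervalIntegrable_speedDensity (h : IsLogConcaveWeight w L) {s t : ℝ}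
    (hs : s ∈ Ico 0 L) (ht : t ∈ Ico 0 L) :
    IntervalIntegrable (speedDensity w) volume s t := by
  rw [speedDensity_eq_mass_mul_millsRatio]
  have hmono : MonotoneOn (mass w * millsRatio w) (Ico 0 L) :=
    (h.monotoneOn_mass.mono Ico_subset_Icc_self).mul h.monotoneOn_millsRatio
      (fun x hx => h.mass_nonneg (Ico_subset_Icc_self hx))
      (fun x hx => h.millsRatio_nonneg (Ico_subset_Icc_self hx))
  exact (hmono.mono (ordConnected_Ico.uIcc_subset hs ht)).intervalIntegrable

theorem integral_speedDensity_le (h : IsLogConcaveWeight w L) {t : ℝ} (ht : t ∈ Ico 0 L) :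
    ∫ s in (0 : ℝ)..t, speedDensity w s ≤ millsRatio w t ^ 2 * mass w t := by
  rw [mass, ← intervalIntegral.integral_const_mul]
  exact integral_mono_on_of_le_Ioo ht.1
    (h.intervalIntegrable_speedDensity ⟨le_rfl, h.length_pos⟩ ht)
    ((h.continuous.intervalIntegrable _ _).const_mul _) fun s hs => h.speedDensity_le hs ht.2

theorem intervalIntegrable_inv (h : IsLogConcaveWeight w L) {s t : ℝ} (hs : s ∈ Ioo 0 L)
    (ht : t ∈ Ioo 0 L) : IntervalIntegrable (fun x => (w x)⁻¹) volume s t :=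
  ContinuousOn.intervalIntegrable <| h.continuous.continuousOn.inv₀ fun x hx =>
    (h.pos x (ordConnected_Ioo.uIcc_subset hs ht hx)).ne'

theorem integral_speedDensity_le_mass_sq_mul (h : IsLogConcaveWeight w L) {s t : ℝ}
    (hs : s ∈ Ioo 0 L) (ht : t ∈ Ioo 0 L) (hst : s ≤ t) :
    ∫ x in s..t, speedDensity w x ≤ mass w t ^ 2 * ∫ x in s..t, (w x)⁻¹ := by
  rw [← intervalIntegral.integral_const_mul]
  refine integral_mono_on hst (h.intervalIntegrable_speedDensity (Ioo_subset_Ico_self hs)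
    (Ioo_subset_Ico_self ht)) ((h.intervalIntegrable_inv hs ht).const_mul _) fun x hx => ?_
  have hx' : x ∈ Icc 0 L := ⟨hs.1.le.trans hx.1, hx.2.trans ht.2.le⟩
  have := h.nonneg hx'
  have := h.mass_nonneg hx'
  rw [speedDensity, div_eq_mul_inv]
  gcongr
  exact h.monotoneOn_mass hx' (Ioo_subset_Icc_self ht) hx.2

theorem momentSlope_le_millsRatio (h : IsLogConcaveWeight w L) {t : ℝ} (ht : t ∈ Ioo 0 L) :
    momentSlope w t ≤ millsRatio w t := by
  have hwt := h.pos t ht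
  have hWt := h.mass_pos ht
  calc momentSlope w t ≤ scaleDensity w t * (millsRatio w t ^ 2 * mass w t) :=
        mul_le_mul_of_nonneg_left (h.integral_speedDensity_le (Ioo_subset_Ico_self ht))
          (h.scaleDensity_nonneg (Ioo_subset_Icc_self ht))
    _ = millsRatio w t := by
        rw [scaleDensity, millsRatio]
        field_simp

theorem momentSlope_le_add (h : IsLogConcaveWeight w L) {s t : ℝ} (hs : s ∈ Ioo 0 L)
    (ht : t ∈ Ioo 0 L) (hst : s ≤ t) :
    momentSlope w t ≤ w t / w s * millsRatio w s + ∫ x in s..t, w t / w x := by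
  have hws := h.pos s hs
  have hwt := h.pos t ht
  have hWs := h.mass_pos hs
  have hWt := h.mass_pos ht
  have hscale := h.scaleDensity_nonneg (Ioo_subset_Icc_self ht)
  have hbelow : scaleDensity w t * ∫ x in (0 : ℝ)..s, speedDensity w x
      ≤ w t / w s * millsRatio w s := by
    calc scaleDensity w t * ∫ x in (0 : ℝ)..s, speedDensity w x
        ≤ scaleDensity w t * (millsRatio w s ^ 2 * mass w s) :=
          mul_le_mul_of_nonneg_left (h.integral_speedDensity_le (Ioo_subset_Ico_self hs)) hscale
      _ ≤ w t / mass w s ^ 2 * (millsRatio w s ^ 2 * mass w s) := by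
          rw [scaleDensity]
          gcongr
          exact h.monotoneOn_mass (Ioo_subset_Icc_self hs) (Ioo_subset_Icc_self ht) hst
      _ = w t / w s * millsRatio w s := by
          rw [millsRatio]
          field_simp
  have habove : scaleDensity w t * ∫ x in s..t, speedDensity w x ≤ ∫ x in s..t, w t / w x := by
    calc scaleDensity w t * ∫ x in s..t, speedDensity w x
        ≤ scaleDensity w t * (mass w t ^ 2 * ∫ x in s..t, (w x)⁻¹) :=
          mul_le_mul_of_nonneg_left (h.integral_speedDensity_le_mass_sq_mul hs ht hst) hscale
      _ = ∫ x in s..t, w t / w x := by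
          simp only [div_eq_mul_inv, intervalIntegral.integral_const_mul, scaleDensity]
          field_simp
  rw [momentSlope, ← integral_add_adjacent_intervals
    (h.intervalIntegrable_speedDensity ⟨le_rfl, h.length_pos⟩ (Ioo_subset_Ico_self hs))
    (h.intervalIntegrable_speedDensity (Ioo_subset_Ico_self hs) (Ioo_subset_Ico_self ht)), mul_add]
  exact add_le_add hbelow habove

theorem continuousOn_momentSlope (h : IsLogConcaveWeight w L) :
    ContinuousOn (momentSlope w) (Ioo 0 L) := by
  have hW := continuous_mass h.continuous
  have hspeed : ContinuousOn (speedDensity w) (Ioo 0 L) :=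
    (hW.pow 2).continuousOn.div h.continuous.continuousOn fun x hx => (h.pos x hx).ne'
  refine ContinuousOn.mul (h.continuous.continuousOn.div (hW.pow 2).continuousOn fun t ht =>
    (pow_pos (h.mass_pos ht) 2).ne') fun t ht => ContinuousAt.continuousWithinAt ?_
  exact (integral_hasDerivAt_right
    (h.intervalIntegrable_speedDensity ⟨le_rfl, h.length_pos⟩ (Ioo_subset_Ico_self ht))
    (hspeed.stronglyMeasurableAtFilter isOpen_Ioo t ht)
    (hspeed.continuousAt (isOpen_Ioo.mem_nhds ht))).continuousAt

theorem intervalIntegrable_momentSlope (h : IsLogConcaveWeight w L) {B : ℝ}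
    (hB : ∀ t ∈ Ioo 0 L, momentSlope w t ≤ B) :
    IntervalIntegrable (momentSlope w) volume 0 L := by
  rw [intervalIntegrable_iff_integrableOn_Ioo_of_le h.length_pos.le]
  refine IntegrableOn.of_bound measure_Ioo_lt_top
    (h.continuousOn_momentSlope.aestronglyMeasurable measurableSet_Ioo) B
    ((ae_restrict_iff' measurableSet_Ioo).2 (.of_forall fun t ht => ?_))
  rw [Real.norm_of_nonneg (h.momentSlope_nonneg (Ioo_subset_Icc_self ht))]
  exact hB t ht

theorem deriv_firstMoment (h : IsLogConcaveWeight w L)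
    (hint : IntervalIntegrable (momentSlope w) volume 0 L) {r : ℝ} (hr : r ∈ Ioo 0 L) :
    deriv (firstMoment w L) r = -momentSlope w r := by
  refine (integral_hasDerivAt_left (hint.mono_set ?_)
    (h.continuousOn_momentSlope.stronglyMeasurableAtFilter isOpen_Ioo r hr)
    (h.continuousOn_momentSlope.continuousAt (isOpen_Ioo.mem_nhds hr))).deriv
  exact uIcc_subset_uIcc_right (Icc_subset_uIcc (Ioo_subset_Icc_self hr))

theorem integral_speedDensity_mul_sq_le (h : IsLogConcaveWeight w L) {v : ℝ → ℝ} {B t : ℝ}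
    (hv : ∀ s ∈ Ioo 0 L, v s ^ 2 ≤ B) (ht : t ∈ Ioo 0 L) :
    ∫ s in (0 : ℝ)..t, speedDensity w s * v s ^ 2
      ≤ B * ∫ s in (0 : ℝ)..t, speedDensity w s := by
  have hint := h.intervalIntegrable_speedDensity ⟨le_rfl, h.length_pos⟩ (Ioo_subset_Ico_self ht)
  have hmem : ∀ s ∈ Ioc 0 t, s ∈ Ioo 0 L := fun s hs => ⟨hs.1, hs.2.trans_lt ht.2⟩
  have hspeed : ∀ s ∈ Ioc 0 t, 0 ≤ speedDensity w s := fun s hs =>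
    h.speedDensity_nonneg (Ioo_subset_Icc_self (hmem s hs))
  rw [mul_comm B, ← intervalIntegral.integral_mul_const, integral_of_le ht.1.le,
    integral_of_le ht.1.le]
  refine integral_mono_of_nonneg ?_ (hint.1.mul_const B) ?_ <;>
    refine (ae_restrict_iff' measurableSet_Ioc).2 (.of_forall fun s hs => ?_)
  · exact mul_nonneg (hspeed s hs) (sq_nonneg _)
  · exact mul_le_mul_of_nonneg_left (hv s (hmem s hs)) (hspeed s hs)

theorem integral_scaleDensity_mul_le (h : IsLogConcaveWeight w L)
    (hint : IntervalIntegrable (momentSlope w) volume 0 L) {v : ℝ → ℝ} {B : ℝ}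
    (hv : ∀ s ∈ Ioo 0 L, v s ^ 2 ≤ B) :
    ∫ t in (0 : ℝ)..L, scaleDensity w t * ∫ s in (0 : ℝ)..t, speedDensity w s * v s ^ 2
      ≤ B * ∫ t in (0 : ℝ)..L, momentSlope w t := by
  rw [← intervalIntegral.integral_const_mul, integral_of_le h.length_pos.le,
    integral_of_le h.length_pos.le, integral_Ioc_eq_integral_Ioo, integral_Ioc_eq_integral_Ioo]
  refine integral_mono_of_nonneg ?_
    (((intervalIntegrable_iff_integrableOn_Ioo_of_le h.length_pos.le).1 hint).const_mul B) ?_ <;>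
    refine (ae_restrict_iff' measurableSet_Ioo).2 (.of_forall fun t ht => ?_)
  · exact mul_nonneg (h.scaleDensity_nonneg (Ioo_subset_Icc_self ht)) <|
      integral_nonneg ht.1.le fun s hs =>
        mul_nonneg (h.speedDensity_nonneg ⟨hs.1, hs.2.trans ht.2.le⟩) (sq_nonneg _)
  · calc scaleDensity w t * ∫ s in (0 : ℝ)..t, speedDensity w s * v s ^ 2
        ≤ scaleDensity w t * (B * ∫ s in (0 : ℝ)..t, speedDensity w s) :=
          mul_le_mul_of_nonneg_left (h.integral_speedDensity_mul_sq_le hv ht)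
            (h.scaleDensity_nonneg (Ioo_subset_Icc_self ht))
      _ = B * momentSlope w t := mul_left_comm _ _ _

end IsLogConcaveWeight

/-- A log-concave weight on `(0, L)` which decays away from its peak `a` at least as fast as the
Gaussian `exp (-κ (x - a) ^ 2)`, in the sense that its quotient by this Gaussian is still monotone
on either side of `a`. -/
structure IsPeakedWeight (w : ℝ → ℝ) (L a κ : ℝ) : Prop extends IsLogConcaveWeight w L where
  mem_Ioo : a ∈ Ioo 0 L
  monotoneOn : MonotoneOn (fun x => w x * exp (κ * (x - a) ^ 2)) (Ioc 0 a)
  antitoneOn : AntitoneOn (fun x => w x * exp (κ * (x - a) ^ 2)) (Ico a L)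

namespace IsPeakedWeight

variable {w : ℝ → ℝ} {L a κ : ℝ}

theorem pow (h : IsPeakedWeight w L a κ) (m : ℕ) : IsPeakedWeight (w ^ m) L a (m * κ) where
  length_pos := h.length_pos
  continuous := h.continuous.pow m
  pos x hx := pow_pos (h.pos x hx) m
  concaveOn_log := by
    simpa only [Pi.pow_apply, log_pow, smul_eq_mul] using h.concaveOn_log.smul m.cast_nonneg
  mem_Ioo := h.mem_Ioo
  monotoneOn x hx y hy hxy := by
    have hwx := h.nonneg ⟨hx.1.le, hx.2.trans h.mem_Ioo.2.le⟩
    simpa only [Pi.pow_apply, mul_assoc, exp_nat_mul, mul_pow] using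
      pow_le_pow_left₀ (mul_nonneg hwx (exp_pos _).le) (h.monotoneOn hx hy hxy) m
  antitoneOn x hx y hy hxy := by
    have hwy := h.nonneg ⟨h.mem_Ioo.1.le.trans hy.1, hy.2.le⟩
    simpa only [Pi.pow_apply, mul_assoc, exp_nat_mul, mul_pow] using
      pow_le_pow_left₀ (mul_nonneg hwy (exp_pos _).le) (h.antitoneOn hx hy hxy) m

theorem div_le_exp_of_le (h : IsPeakedWeight w L a κ) (hκ : 0 ≤ κ) {x t : ℝ} (hx : 0 < x)
    (hxt : x ≤ t) (hta : t ≤ a) :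
    w x / w t ≤ exp (-(κ / 2 * ((t - x) * (t - x + |t - a|)))) := by
  have hwt := h.pos t ⟨hx.trans_le hxt, hta.trans_lt h.mem_Ioo.2⟩
  have hmono : w x * exp (κ * (x - a) ^ 2) ≤ w t * exp (κ * (t - a) ^ 2) :=
    h.monotoneOn ⟨hx, hxt.trans hta⟩ ⟨hx.trans_le hxt, hta⟩ hxt
  calc w x / w t ≤ exp (κ * (t - a) ^ 2) / exp (κ * (x - a) ^ 2) := by
        rwa [div_le_div_iff₀ hwt (exp_pos _), mul_comm (exp _)]
    _ = exp (-(κ * ((t - x) * (a - x + (a - t))))) := by rw [← exp_sub]; ring_nf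
    _ ≤ exp (-(κ / 2 * ((t - x) * (t - x + |t - a|)))) := by
        rw [abs_of_nonpos (sub_nonpos.2 hta), exp_le_exp]
        nlinarith [mul_nonneg hκ (mul_nonneg (sub_nonneg.2 hxt) (sub_nonneg.2 hxt)),
          mul_nonneg hκ (mul_nonneg (sub_nonneg.2 hxt) (sub_nonneg.2 hta))]

theorem div_le_exp_of_ge (h : IsPeakedWeight w L a κ) (hκ : 0 ≤ κ) {x t : ℝ} (hax : a ≤ x)
    (hxt : x ≤ t) (htL : t < L) :
    w t / w x ≤ exp (-(κ / 2 * ((t - x) * (t - x + |t - a|)))) := by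
  have hwx := h.pos x ⟨h.mem_Ioo.1.trans_le hax, hxt.trans_lt htL⟩
  have hanti : w t * exp (κ * (t - a) ^ 2) ≤ w x * exp (κ * (x - a) ^ 2) :=
    h.antitoneOn ⟨hax, hxt.trans_lt htL⟩ ⟨hax.trans hxt, htL⟩ hxt
  calc w t / w x ≤ exp (κ * (x - a) ^ 2) / exp (κ * (t - a) ^ 2) := by
        rwa [div_le_div_iff₀ hwx (exp_pos _), mul_comm (exp _)]
    _ = exp (-(κ * ((t - x) * (t - a + (x - a))))) := by rw [← exp_sub]; ring_nf
    _ ≤ exp (-(κ / 2 * ((t - x) * (t - x + |t - a|)))) := by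
        rw [abs_of_nonneg (sub_nonneg.2 (hax.trans hxt)), exp_le_exp]
        nlinarith [mul_nonneg hκ (mul_nonneg (sub_nonneg.2 hxt) (sub_nonneg.2 hax))]

theorem millsRatio_le (h : IsPeakedWeight w L a κ) (hκ : 0 < κ) {t : ℝ} (ht : t ∈ Ioc 0 a) :
    millsRatio w t ≤ 3 / (√κ + κ * |t - a|) :=
  calc millsRatio w t = ∫ x in (0 : ℝ)..t, w x / w t :=
        (intervalIntegral.integral_div _ _).symm
    _ ≤ ∫ x in (0 : ℝ)..t, exp (-(κ / 2 * ((t - x) * (t - x + |t - a|)))) :=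
        integral_mono_on_of_le_Ioo ht.1.le ((h.continuous.div_const _).intervalIntegrable _ _)
          (Continuous.intervalIntegrable (by fun_prop) _ _)
          fun _ hx => h.div_le_exp_of_le hκ.le hx.1 hx.2.le ht.2
    _ ≤ 3 / (√κ + κ * |t - a|) := integral_exp_neg_half_mul_le hκ (abs_nonneg _) ht.1.le

theorem integral_div_le (h : IsPeakedWeight w L a κ) (hκ : 0 < κ) {t : ℝ} (ht : t ∈ Ico a L) :
    ∫ x in a..t, w t / w x ≤ 3 / (√κ + κ * |t - a|) := by
  have hint : IntervalIntegrable (fun x => w t / w x) volume a t := by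
    simpa only [div_eq_mul_inv] using
      (h.intervalIntegrable_inv h.mem_Ioo ⟨h.mem_Ioo.1.trans_le ht.1, ht.2⟩).const_mul (w t)
  calc ∫ x in a..t, w t / w x
      ≤ ∫ x in a..t, exp (-(κ / 2 * ((t - x) * (t - x + |t - a|)))) :=
        integral_mono_on ht.1 hint (Continuous.intervalIntegrable (by fun_prop) _ _)
          fun _ hx => h.div_le_exp_of_ge hκ.le hx.1 hx.2 ht.2
    _ ≤ 3 / (√κ + κ * |t - a|) := integral_exp_neg_half_mul_le hκ (abs_nonneg _) ht.1

theorem div_mul_millsRatio_le (h : IsPeakedWeight w L a κ) (hκ : 0 < κ) {t : ℝ}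
    (ht : t ∈ Ico a L) : w t / w a * millsRatio w a ≤ 6 / (√κ + κ * |t - a|) := by
  have hpeak : millsRatio w a ≤ 3 / √κ := by
    simpa only [sub_self, abs_zero, mul_zero, add_zero] using
      h.millsRatio_le hκ ⟨h.mem_Ioo.1, le_rfl⟩
  have hdecay : w t / w a ≤ exp (-(κ * |t - a| ^ 2)) := by
    refine (h.div_le_exp_of_ge hκ.le le_rfl ht.1 ht.2).trans_eq ?_
    rw [abs_of_nonneg (sub_nonneg.2 ht.1)]
    ring_nf
  have hmills := h.millsRatio_nonneg (Ioo_subset_Icc_self h.mem_Ioo)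
  calc w t / w a * millsRatio w a ≤ exp (-(κ * |t - a| ^ 2)) * (3 / √κ) := by gcongr
    _ = 3 * (exp (-(κ * |t - a| ^ 2)) / √κ) := by ring
    _ ≤ 3 * (2 / (√κ + κ * |t - a|)) :=
        mul_le_mul_of_nonneg_left (exp_neg_mul_sq_div_sqrt_le hκ (abs_nonneg _)) zero_le_three
    _ = 6 / (√κ + κ * |t - a|) := by ring

theorem momentSlope_le (h : IsPeakedWeight w L a κ) (hκ : 0 < κ) {t : ℝ} (ht : t ∈ Ioo 0 L) :
    momentSlope w t ≤ 9 / (√κ + κ * |t - a|) := by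
  rcases le_total t a with hta | hat
  · calc momentSlope w t ≤ millsRatio w t := h.momentSlope_le_millsRatio ht
      _ ≤ 3 / (√κ + κ * |t - a|) := h.millsRatio_le hκ ⟨ht.1, hta⟩
      _ ≤ 9 / (√κ + κ * |t - a|) := by gcongr; norm_num
  · calc momentSlope w t ≤ w t / w a * millsRatio w a + ∫ x in a..t, w t / w x :=
          h.momentSlope_le_add h.mem_Ioo ht hat
      _ ≤ 6 / (√κ + κ * |t - a|) + 3 / (√κ + κ * |t - a|) :=
          add_le_add (h.div_mul_millsRatio_le hκ ⟨hat, ht.2⟩) (h.integral_div_le hκ ⟨hat, ht.2⟩)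
      _ = 9 / (√κ + κ * |t - a|) := by ring

theorem momentSlope_le_div_sqrt (h : IsPeakedWeight w L a κ) (hκ : 0 < κ) {t : ℝ}
    (ht : t ∈ Ioo 0 L) : momentSlope w t ≤ 9 / √κ := by
  refine (h.momentSlope_le hκ ht).trans ?_
  gcongr
  exact le_add_of_nonneg_right (by positivity)

theorem integral_momentSlope_le (h : IsPeakedWeight w L a κ) (hκ : 0 < κ) :
    ∫ t in (0 : ℝ)..L, momentSlope w t ≤ 18 * log (1 + √κ * L) / κ :=
  calc ∫ t in (0 : ℝ)..L, momentSlope w t ≤ ∫ t in (0 : ℝ)..L, 9 * (√κ + κ * |t - a|)⁻¹ :=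
        integral_mono_on_of_le_Ioo h.length_pos.le
          (h.intervalIntegrable_momentSlope fun _ ht => h.momentSlope_le_div_sqrt hκ ht)
          (Continuous.intervalIntegrable (.const_mul (.inv₀ (by fun_prop) fun t => by positivity) _)
            _ _)
          fun _ ht => h.momentSlope_le hκ ht
    _ = 9 * ∫ t in (0 : ℝ)..L, (√κ + κ * |t - a|)⁻¹ := intervalIntegral.integral_const_mul _ _
    _ ≤ 9 * (2 * log (1 + √κ * L) / κ) := by
        gcongr
        exact integral_inv_sqrt_add_mul_abs_le hκ (Ioo_subset_Icc_self h.mem_Ioo)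
    _ = 18 * log (1 + √κ * L) / κ := by ring

theorem varianceIntegral_le (h : IsPeakedWeight w L a κ) (hκ : 0 < κ) :
    varianceIntegral w L ≤ 2916 * (log (1 + √κ * L) / κ ^ 2) := by
  have hint := h.intervalIntegrable_momentSlope fun _ ht => h.momentSlope_le_div_sqrt hκ ht
  have hderiv : ∀ s ∈ Ioo 0 L, deriv (firstMoment w L) s ^ 2 ≤ 81 / κ := fun s hs => by
    rw [h.deriv_firstMoment hint hs, neg_sq]
    calc momentSlope w s ^ 2 ≤ (9 / √κ) ^ 2 := pow_le_pow_left₀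
          (h.momentSlope_nonneg (Ioo_subset_Icc_self hs)) (h.momentSlope_le_div_sqrt hκ hs) 2
      _ = 81 / κ := by rw [div_pow, sq_sqrt hκ.le]; norm_num
  calc varianceIntegral w L ≤ 2 * (81 / κ * ∫ t in (0 : ℝ)..L, momentSlope w t) :=
        mul_le_mul_of_nonneg_left (h.integral_scaleDensity_mul_le hint hderiv) zero_le_two
    _ ≤ 2 * (81 / κ * (18 * log (1 + √κ * L) / κ)) := by
        gcongr
        exact h.integral_momentSlope_le hκ
    _ = 2916 * (log (1 + √κ * L) / κ ^ 2) := by ring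

end IsPeakedWeight

theorem isBigO_log_one_add_mul_sqrt {b : ℝ} (hb : 0 ≤ b) :
    (fun m : ℕ => log (1 + b * √m)) =O[atTop] fun m : ℕ => log m := by
  refine IsBigO.of_bound (log (1 + b) + 1) ?_
  filter_upwards [eventually_ge_atTop 3] with m hm
  have hm' : (3 : ℝ) ≤ m := by exact_mod_cast hm
  have hlogm : 1 ≤ log m :=
    (le_log_iff_exp_le (by linarith)).2 (exp_one_lt_three.le.trans hm')
  have hlogb : 0 ≤ log (1 + b) := log_nonneg (by linarith)
  have hsqrt : √(m : ℝ) ≤ m := sqrt_le_iff.2 ⟨by linarith, by nlinarith⟩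
  rw [norm_of_nonneg (log_nonneg (le_add_of_nonneg_right (by positivity))),
    norm_of_nonneg (by linarith)]
  calc log (1 + b * √m) ≤ log ((1 + b) * m) := log_le_log (by positivity) (by nlinarith)
    _ = log (1 + b) + log m := log_mul (by linarith) (by linarith)
    _ ≤ (log (1 + b) + 1) * log m := by nlinarith

theorem isBigO_log_div_sq_pred :
    (fun n : ℕ => log (n - 1 : ℕ) / ((n - 1 : ℕ) : ℝ) ^ 2)
      =O[atTop] fun n : ℕ => log n / (n : ℝ) ^ 2 := by
  refine IsBigO.of_bound 4 ?_
  filter_upwards [eventually_ge_atTop 2] with n hn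
  have hn' : (2 : ℝ) ≤ n := by exact_mod_cast hn
  rw [Nat.cast_pred (by omega), norm_of_nonneg, norm_of_nonneg]
  · calc log ((n : ℝ) - 1) / ((n : ℝ) - 1) ^ 2 ≤ log n / (n / 2) ^ 2 := by
          have := log_nonneg (by linarith : (1 : ℝ) ≤ n)
          gcongr <;> linarith
      _ = 4 * (log n / n ^ 2) := by field_simp; norm_num
  · exact div_nonneg (log_nonneg (by linarith)) (sq_nonneg _)
  · exact div_nonneg (log_nonneg (by linarith)) (sq_nonneg _)

theorem IsPeakedWeight.isBigO_varianceIntegral_pow {f : ℝ → ℝ} {L a κ : ℝ}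
    (h : IsPeakedWeight f L a κ) (hκ : 0 < κ) :
    (fun m : ℕ => varianceIntegral (f ^ m) L) =O[atTop] fun m : ℕ => log m / (m : ℝ) ^ 2 := by
  have hb : 0 ≤ √κ * L := mul_nonneg (sqrt_nonneg κ) h.length_pos.le
  have hbound : (fun m : ℕ => varianceIntegral (f ^ m) L)
      =O[atTop] fun m : ℕ => log (1 + √κ * L * √m) / (m : ℝ) ^ 2 := by
    refine IsBigO.of_bound (2916 / κ ^ 2) ?_
    filter_upwards [eventually_gt_atTop 0] with m hm
    have hm' : (0 : ℝ) < m := Nat.cast_pos.2 hm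
    rw [norm_of_nonneg (h.pow m).varianceIntegral_nonneg, norm_of_nonneg
      (div_nonneg (log_nonneg (le_add_of_nonneg_right (by positivity))) (sq_nonneg _))]
    calc varianceIntegral (f ^ m) L
        ≤ 2916 * (log (1 + √(m * κ) * L) / (m * κ) ^ 2) :=
          (h.pow m).varianceIntegral_le (mul_pos hm' hκ)
      _ = 2916 / κ ^ 2 * (log (1 + √κ * L * √m) / m ^ 2) := by
          rw [sqrt_mul m.cast_nonneg, mul_assoc (√(m : ℝ)), mul_comm (√(m : ℝ))]
          field_simp
  simp only [div_eq_mul_inv] at hbound ⊢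
  exact hbound.trans ((isBigO_log_one_add_mul_sqrt hb).mul (isBigO_refl _ _))

theorem exists_isPeakedWeight_of_concaveOn {f : ℝ → ℝ} {L a : ℝ} (ha : a ∈ Ioo 0 L)
    (hf : Differentiable ℝ f) (hpos : ∀ x ∈ Ioo 0 L, 0 < f x) (hconc : ConcaveOn ℝ (Ioo 0 L) f)
    (hfa : deriv f a = 0) (hfa' : deriv (deriv f) a < 0) :
    ∃ κ > 0, IsPeakedWeight f L a κ := by
  have hfa_pos := hpos a ha
  obtain ⟨c, hc, hdecay⟩ := exists_mul_sub_le_neg_mul_sq ha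
    (hconc.antitoneOn_deriv fun x _ => hf x) hfa hfa'
  set κ := c / (2 * f a) with hκ
  have hκ_pos : 0 < κ := by positivity
  have hderiv (x : ℝ) : HasDerivAt (fun x => f x * exp (κ * (x - a) ^ 2))
      (exp (κ * (x - a) ^ 2) * (deriv f x + 2 * κ * (x - a) * f x)) x := by
    have hgauss := ((((hasDerivAt_id x).sub_const a).pow 2).const_mul κ).exp
    refine ((hf x).hasDerivAt.mul hgauss).congr_deriv ?_
    simp only [id, Pi.pow_apply]
    ring
  have hsign : ∀ x ∈ Ioo 0 L, (deriv f x + 2 * κ * (x - a) * f x) * (x - a) ≤ 0 := fun x hx =>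
    calc (deriv f x + 2 * κ * (x - a) * f x) * (x - a)
        = deriv f x * (x - a) + 2 * κ * (x - a) ^ 2 * f x := by ring
      _ ≤ -(c * (x - a) ^ 2) + 2 * κ * (x - a) ^ 2 * f a := by
          gcongr
          · exact hdecay x hx
          · exact le_of_concaveOn_of_deriv_eq_zero hconc ha (hf a) hfa hx
      _ = 0 := by rw [hκ]; field_simp; ring
  have hcont : Continuous fun x => f x * exp (κ * (x - a) ^ 2) :=
    continuous_iff_continuousAt.2 fun x => (hderiv x).continuousAt
  refine ⟨κ, hκ_pos, ⟨⟨ha.1.trans ha.2, hf.continuous, hpos, concaveOn_log_comp hconc hpos⟩,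
    ha, ?_, ?_⟩⟩
  · refine monotoneOn_of_hasDerivWithinAt_nonneg (convex_Ioc 0 a) hcont.continuousOn
      (fun x _ => (hderiv x).hasDerivWithinAt) fun x hx => ?_
    rw [interior_Ioc] at hx
    exact mul_nonneg (exp_pos _).le (nonneg_of_mul_nonpos_left
      (hsign x ⟨hx.1, hx.2.trans ha.2⟩) (sub_neg.2 hx.2))
  · refine antitoneOn_of_hasDerivWithinAt_nonpos (convex_Ico a L) hcont.continuousOn
      (fun x _ => (hderiv x).hasDerivWithinAt) fun x hx => ?_
    rw [interior_Ico] at hx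
    exact mul_nonpos_of_nonneg_of_nonpos (exp_pos _).le (nonpos_of_mul_nonpos_left
      (hsign x ⟨ha.1.trans hx.1, hx.2⟩) (sub_pos.2 hx.1))

theorem deriv_midpoint_eq_zero {f : ℝ → ℝ} {L : ℝ} (hsym : ∀ s, f (L - s) = f s) :
    deriv f (L / 2) = 0 := by
  have hodd : deriv f (L / 2) = -deriv f (L - L / 2) := by
    conv_lhs => rw [← funext hsym]
    exact deriv_comp_const_sub _ _ _
  rw [sub_half] at hodd
  linarith

theorem exists_isPeakedWeight_of_symmetric {f : ℝ → ℝ} {L : ℝ} (hL : 0 < L)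
    (hf : ContDiff ℝ 2 f) (hpos : ∀ s ∈ Ioo 0 L, 0 < f s) (hsym : ∀ s, f (L - s) = f s)
    (hf'' : ∀ s ∈ Ioo 0 L, deriv (deriv f) s ≤ 0) (hsec : deriv (deriv f) (L / 2) < 0) :
    ∃ κ > 0, IsPeakedWeight f L (L / 2) κ := by
  have hd : Differentiable ℝ f := hf.differentiable two_ne_zero
  have hd' : Differentiable ℝ (deriv f) :=
    ((contDiff_succ_iff_deriv (n := 1)).1 hf).2.2.differentiable one_ne_zero
  have hconc : ConcaveOn ℝ (Ioo 0 L) f := concaveOn_of_deriv2_nonpos (convex_Ioo 0 L)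
    hd.continuous.continuousOn hd.differentiableOn hd'.differentiableOn
    fun s hs => hf'' s (interior_subset hs)
  exact exists_isPeakedWeight_of_concaveOn ⟨half_pos hL, half_lt_self hL⟩ hd hpos hconc
    (deriv_midpoint_eq_zero hsym) hsec

theorem variance_bigO_general {f : ℝ → ℝ} {L a κ : ℝ} (hκ : 0 < κ)
    (hf : IsPeakedWeight f L a κ)
    (I : ℕ → ℝ → ℝ)
    (hI : ∀ n r, I n r = ∫ s in (0 : ℝ)..r, f s ^ (n - 1))
    (u : ℕ → ℝ → ℝ)
    (hu : ∀ n r, u n r = ∫ t in r..L, f t ^ (n - 1) / (I n t) ^ 2 *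
        ∫ s in (0 : ℝ)..t, (I n s) ^ 2 / f s ^ (n - 1))
    (v : ℕ → ℝ)
    (hv : ∀ n, 2 ≤ n → v n = 2 * ∫ t in (0 : ℝ)..L, f t ^ (n - 1) / (I n t) ^ 2 *
        ∫ s in (0 : ℝ)..t, (I n s) ^ 2 / f s ^ (n - 1) * (deriv (u n) s) ^ 2) :
    v =O[atTop] (fun n : ℕ => Real.log n / (n : ℝ) ^ 2) := by
  have hmass (n : ℕ) : I n = mass (f ^ (n - 1)) := funext (hI n)
  have hmoment (n : ℕ) : u n = firstMoment (f ^ (n - 1)) L := funext fun r => by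
    rw [hu, hmass]
    rfl
  have hvariance : (fun n => varianceIntegral (f ^ (n - 1)) L) =ᶠ[atTop] v := by
    filter_upwards [eventually_ge_atTop 2] with n hn
    rw [hv n hn, hmass, hmoment]
    rfl
  exact (((hf.isBigO_varianceIntegral_pow hκ).comp_tendsto (tendsto_sub_atTop_nat 1)).trans
    isBigO_log_div_sq_pred).congr' hvariance .rfl

/-- `Var(τₙ) = O(ln n / n²)`, the variance being given by the explicit formula
`2 ∫₀ᴸ (f^{n-1}(t)/Iₙ²(t)) ∫₀ᵗ (Iₙ²(s)/f^{n-1}(s)) (u'ₙ,₁(s))² ds dt`. -/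
theorem variance_bigO
    (L : ℝ) (hL : 0 < L) (f : ℝ → ℝ)
    (hf : ContDiff ℝ 3 f)
    (hpos : ∀ s ∈ Set.Ioo 0 L, 0 < f s)
    (hasymp : Asymptotics.IsEquivalent (𝓝[>] (0:ℝ)) f id)
    (hsym : ∀ s, f (L - s) = f s)
    (hf' : ∀ s ∈ Set.Ico 0 (L / 2), 0 < deriv f s)
    (hf'' : ∀ s ∈ Set.Icc 0 L, s ≠ L / 2 → deriv (deriv f) s ≤ 0)
    (hsec : deriv (deriv f) (L / 2) < 0)
    (I : ℕ → ℝ → ℝ)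
    (hI : ∀ n r, I n r = ∫ s in (0:ℝ)..r, f s ^ (n - 1))
    (u : ℕ → ℝ → ℝ)
    (hu : ∀ n r, u n r = ∫ t in r..L, f t ^ (n - 1) / (I n t) ^ 2 *
        ∫ s in (0:ℝ)..t, (I n s) ^ 2 / f s ^ (n - 1))
    {Ω : ℕ → Type*} [∀ n, MeasureSpace (Ω n)]
    [∀ n, IsProbabilityMeasure (volume : Measure (Ω n))]
    (τ : ∀ n, Ω n → ℝ)
    (hVar : ∀ n, 2 ≤ n →
      variance (τ n) volume = 2 * ∫ t in (0:ℝ)..L, f t ^ (n - 1) / (I n t) ^ 2 *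
        ∫ s in (0:ℝ)..t, (I n s) ^ 2 / f s ^ (n - 1) * (deriv (u n) s) ^ 2) :
    (fun n : ℕ => variance (τ n) volume)
      =O[atTop] (fun n : ℕ => Real.log n / (n : ℝ) ^ 2) := by
  obtain ⟨κ, hκ, hpeak⟩ := exists_isPeakedWeight_of_symmetric hL (hf.of_le (by norm_num)) hpos hsym
    (fun s hs => (eq_or_ne s (L / 2)).elim (fun hs2 => hs2 ▸ hsec.le)
      (hf'' s (Ioo_subset_Icc_self hs))) hsec
  exact variance_bigO_general hκ hpeak I hI u hu _ hVar
end
end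

section
/- For k ≥ 2, under the hypotheses f C^{2k+1}, weight, symmetric about L/2, f'>0 on [0,L/2), f''≤0, f(L/2+h)=f(L/2)+(f^{(2k)}(L/2)/(2k)!)h^{2k}+o(h^{2k}) with f^{(2k)}(L/2)<0, one has E[τₙ] ~ (2k C(2k) C(f,2k)²)/(n^{1/k} Γ(1/(2k))), where C(f,2k) = ((2k)! f(L/2)/|f^{(2k)}(L/2)|)^{1/(2k)}, C(2k) = ∫₀^∞ h₁(a) h₁(−a) e^{a^{2k}} da and h₁(x) = ∫_{−∞}^x e^{−a^{2k}} da. -/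
open MeasureTheory Filter Set Asymptotics Topology intervalIntegral Real

noncomputable section

/-!
The mean of `τₙ` is `meanHittingTime` of the weight `f ^ (n - 1)`. Centre `f` at `L / 2` and divide
it by its maximum, to get an even concave profile `g` with `g h = 1 - (|h| / A) ^ p + o(|h| ^ p)`.
With `e = A * m ^ (-1 / p)`, the rescaled weights `b ↦ g (e * b) ^ m` converge pointwise to
`exp (-|b| ^ p)`, while rescaling space by `e` multiplies mean times by `e ^ 2`; this is the source
of the order `n ^ (-2 / p)` and of the integral `C(2k)`.

Concavity of `g` gives the domination needed to pass to the limit: the tails of the rescaled weights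
beyond `a` decay exponentially at a rate of order `max 1 (a ^ (p - 1))`, uniformly in `m`, so the
densities of the mean times are at most a multiple of the inverse of this rate. It is integrable at
infinity because `p > 2`.
-/

/-- Mean of the hitting time of `L` by the diffusion started at `0` with generator
`∂² + (ln (W² / w))' ∂`, where `W r = ∫₀ʳ w`. -/
def meanHittingTime (w : ℝ → ℝ) (L : ℝ) : ℝ :=
  ∫ s in (0 : ℝ)..L, (∫ t in (0 : ℝ)..s, w t) / w s *
    (((∫ t in (0 : ℝ)..L, w t) - ∫ t in (0 : ℝ)..s, w t) / ∫ t in (0 : ℝ)..L, w t)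

/-- Density of the mean crossing time of the line, up to the total mass of the weight `w`. It is
`0` where `w` vanishes, so that a weight on an interval may be extended by zero. -/
def crossingDensity (w : ℝ → ℝ) (a : ℝ) : ℝ :=
  (∫ b in Iic a, w b) * (∫ b in Ioi a, w b) / w a

/-- The analogue of `meanHittingTime` for a weight on the whole line: the mean time to go from
`-∞` to `∞`. -/
def meanCrossingTime (w : ℝ → ℝ) : ℝ :=
  (∫ a, crossingDensity w a) / ∫ b, w b

section Crossing

variable {w : ℝ → ℝ}

theorem setIntegral_preimage_comp_affine (w : ℝ → ℝ) (d : ℝ) {e : ℝ} (he : 0 < e) {s : Set ℝ}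
    (hs : MeasurableSet s) :
    ∫ b in (fun b => d + e * b) ⁻¹' s, w (d + e * b) = e⁻¹ * ∫ b in s, w b := by
  have hpre : MeasurableSet ((fun b => d + e * b) ⁻¹' s) :=
    ((measurable_const_mul e).const_add d) hs
  calc ∫ b in (fun b => d + e * b) ⁻¹' s, w (d + e * b)
      = ∫ b, s.indicator w (d + e * b) := (MeasureTheory.integral_indicator hpre).symm
    _ = e⁻¹ * ∫ b, s.indicator w (d + b) := by
        simpa [abs_of_pos he] using
          Measure.integral_comp_mul_left (fun b => s.indicator w (d + b)) e
    _ = e⁻¹ * ∫ b in s, w b := by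
        rw [integral_add_left_eq_self (fun b => s.indicator w b),
          MeasureTheory.integral_indicator hs]

theorem crossingDensity_const_mul_comp_affine (w : ℝ → ℝ) (c d : ℝ) {e : ℝ} (he : 0 < e)
    (a : ℝ) :
    crossingDensity (fun b => c * w (d + e * b)) a
      = c * (e ^ 2)⁻¹ * crossingDensity w (d + e * a) := by
  have hIic : Iic a = (fun b => d + e * b) ⁻¹' Iic (d + e * a) := by ext; simp [he]
  have hIoi : Ioi a = (fun b => d + e * b) ⁻¹' Ioi (d + e * a) := by ext; simp [he]
  simp only [crossingDensity, MeasureTheory.integral_const_mul]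
  rw [hIic, hIoi, setIntegral_preimage_comp_affine w d he measurableSet_Iic,
    setIntegral_preimage_comp_affine w d he measurableSet_Ioi]
  rcases eq_or_ne c 0 with rfl | hc
  · simp
  · rcases eq_or_ne (w (d + e * a)) 0 with hw | hw
    · simp [hw]
    · field_simp

theorem meanCrossingTime_const_mul_comp_affine (w : ℝ → ℝ) {c : ℝ} (hc : c ≠ 0) (d : ℝ) {e : ℝ}
    (he : 0 < e) :
    meanCrossingTime (fun b => c * w (d + e * b)) = (e ^ 2)⁻¹ * meanCrossingTime w := by
  have hint (v : ℝ → ℝ) : ∫ b, v (d + e * b) = e⁻¹ * ∫ b, v b := by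
    simpa using setIntegral_preimage_comp_affine v d he MeasurableSet.univ
  simp only [meanCrossingTime, crossingDensity_const_mul_comp_affine w c d he,
    MeasureTheory.integral_const_mul, hint]
  field_simp

theorem apply_abs_of_even (hw : w.Even) (a : ℝ) : w |a| = w a := by
  rcases abs_choice a with h | h <;> simp [h, hw.eq]

theorem setIntegral_Iic_neg_of_even (hw : w.Even) (a : ℝ) :
    ∫ b in Iic (-a), w b = ∫ b in Ioi a, w b := by
  simpa [hw.eq] using integral_comp_neg_Iic (-a) w

theorem crossingDensity_even (hw : w.Even) : (crossingDensity w).Even := fun a => by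
  rw [crossingDensity, crossingDensity, setIntegral_Iic_neg_of_even hw,
    ← setIntegral_Iic_neg_of_even hw (-a), neg_neg, hw, mul_comm (∫ b in Ioi a, w b)]

theorem integral_eq_two_mul_setIntegral_Ioi_of_even (hw : w.Even) :
    ∫ a, w a = 2 * ∫ a in Ioi 0, w a := by
  simpa only [apply_abs_of_even hw] using integral_comp_abs (f := w)

theorem meanCrossingTime_of_even (hw : w.Even) :
    meanCrossingTime w = 2 * (∫ a in Ioi 0, crossingDensity w a) / ∫ b, w b := by
  rw [meanCrossingTime, integral_eq_two_mul_setIntegral_Ioi_of_even (crossingDensity_even hw)]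

theorem setIntegral_Iic_indicator_Ioo (w : ℝ → ℝ) {l r s : ℝ} (hs : s ∈ Ioo l r) :
    ∫ b in Iic s, (Ioo l r).indicator w b = ∫ t in l..s, w t := by
  have hset : Iic s ∩ Ioo l r = Ioc l s := by
    ext b
    exact ⟨fun h => ⟨h.2.1, h.1⟩, fun h => ⟨h.2, h.1, h.2.trans_lt hs.2⟩⟩
  rw [setIntegral_indicator measurableSet_Ioo, hset, intervalIntegral.integral_of_le hs.1.le]

theorem setIntegral_Ioi_indicator_Ioo (w : ℝ → ℝ) {l r s : ℝ} (hs : s ∈ Ioo l r) :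
    ∫ b in Ioi s, (Ioo l r).indicator w b = ∫ t in s..r, w t := by
  have hset : Ioi s ∩ Ioo l r = Ioo s r := by
    ext b
    exact ⟨fun h => ⟨h.1, h.2.2⟩, fun h => ⟨h.1, hs.1.trans h.1, h.2⟩⟩
  rw [setIntegral_indicator measurableSet_Ioo, hset, ← integral_Ioc_eq_integral_Ioo,
    intervalIntegral.integral_of_le hs.2.le]

theorem integral_indicator_Ioo (w : ℝ → ℝ) {l r : ℝ} (h : l ≤ r) :
    ∫ b, (Ioo l r).indicator w b = ∫ t in l..r, w t := by
  rw [MeasureTheory.integral_indicator measurableSet_Ioo, intervalIntegral.integral_of_le h,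
    integral_Ioc_eq_integral_Ioo]

theorem meanCrossingTime_indicator_Ioo {L : ℝ} (hL : 0 ≤ L) (hw : IntegrableOn w (Ioo 0 L)) :
    meanCrossingTime ((Ioo 0 L).indicator w) = meanHittingTime w L := by
  have hint {s : ℝ} (hs : s ∈ Icc 0 L) : IntervalIntegrable w volume 0 s :=
    ((integrableOn_Icc_iff_integrableOn_Ioo (a := 0)).2 hw |>.mono_set
      (uIcc_subset_Icc ⟨le_rfl, hL⟩ hs)).intervalIntegrable
  have hdensity (s : ℝ) : crossingDensity ((Ioo 0 L).indicator w) s = (Ioo 0 L).indicator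
      (fun s => (∫ t in 0..s, w t) / w s * ((∫ t in 0..L, w t) - ∫ t in 0..s, w t)) s := by
    by_cases hs : s ∈ Ioo 0 L
    · rw [crossingDensity, setIntegral_Iic_indicator_Ioo w hs, setIntegral_Ioi_indicator_Ioo w hs,
        indicator_of_mem hs, indicator_of_mem hs, intervalIntegral.integral_interval_sub_left
          (hint ⟨hL, le_rfl⟩) (hint (Ioo_subset_Icc_self hs))]
      ring
    · simp [crossingDensity, hs]
  simp only [meanCrossingTime, meanHittingTime, hdensity, integral_indicator_Ioo _ hL,
    ← mul_div_assoc, intervalIntegral.integral_div]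

end Crossing

/-- The even weights `w` with `w 0 ≤ 1` whose tail beyond `a ≥ 0` decays exponentially, at rate
`ρ a` and up to the factor `C`. -/
structure IsDecayingWeight (C : ℝ) (ρ w : ℝ → ℝ) : Prop where
  const_nonneg : 0 ≤ C
  rate_pos : ∀ a, 0 ≤ a → 0 < ρ a
  measurable : Measurable w
  nonneg : ∀ b, 0 ≤ w b
  even : w.Even
  map_zero_le : w 0 ≤ 1
  map_add_le : ∀ a u, 0 ≤ a → 0 ≤ u → w (a + u) ≤ w a * (C * Real.exp (-(ρ a * u)))

theorem integrable_exp_neg_mul_abs {c : ℝ} (hc : 0 < c) :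
    Integrable fun b : ℝ => Real.exp (-(c * |b|)) := by
  rw [← integrableOn_univ, ← Iic_union_Ioi (a := (0 : ℝ))]
  refine IntegrableOn.union ?_ ?_
  · refine (integrableOn_exp_mul_Iic hc 0).congr_fun (fun b hb => ?_) measurableSet_Iic
    simp [abs_of_nonpos (mem_Iic.1 hb)]
  · refine (exp_neg_integrableOn_Ioi 0 hc).congr_fun (fun b hb => ?_) measurableSet_Ioi
    simp [abs_of_pos (mem_Ioi.1 hb)]

theorem integrableOn_Ioi_exp_neg_mul_sub {c : ℝ} (hc : 0 < c) (a : ℝ) :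
    IntegrableOn (fun b : ℝ => Real.exp (-(c * (b - a)))) (Ioi a) := by
  refine IntegrableOn.congr_fun ((exp_neg_integrableOn_Ioi a hc).const_mul (Real.exp (c * a)))
    (fun b _ => ?_) measurableSet_Ioi
  rw [← Real.exp_add]
  ring_nf

theorem setIntegral_Ioi_exp_neg_mul_sub {c : ℝ} (hc : 0 < c) (a : ℝ) :
    ∫ b in Ioi a, Real.exp (-(c * (b - a))) = c⁻¹ := by
  have hfactor (b : ℝ) : Real.exp (-(c * (b - a))) = Real.exp (c * a) * Real.exp (-c * b) := by
    rw [← Real.exp_add]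
    ring_nf
  calc ∫ b in Ioi a, Real.exp (-(c * (b - a)))
      = ∫ b in Ioi a, Real.exp (c * a) * Real.exp (-c * b) := by simp only [hfactor]
    _ = c⁻¹ := by
        rw [MeasureTheory.integral_const_mul, integral_exp_mul_Ioi (neg_neg_of_pos hc),
          neg_div_neg_eq, ← mul_div_assoc, ← Real.exp_add]
        simp

theorem setIntegral_pos_of_forall_pos {α : Type*} [MeasurableSpace α] {μ : Measure α} {s : Set α}
    (hs : μ s ≠ 0) {f : α → ℝ} (hf : IntegrableOn f s μ) (hpos : ∀ x, 0 < f x) :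
    0 < ∫ x in s, f x ∂μ := by
  have hsupp : Function.support f = univ := Function.support_eq_univ fun x => (hpos x).ne'
  rw [integral_pos_iff_support_of_nonneg (fun x => (hpos x).le) hf, hsupp]
  simpa using pos_iff_ne_zero.2 hs

theorem measurable_crossingDensity {w : ℝ → ℝ} (hw : Integrable w) (hmeas : Measurable w)
    (hnonneg : ∀ b, 0 ≤ w b) : Measurable (crossingDensity w) := by
  have hmono {s t : Set ℝ} (hst : s ⊆ t) : ∫ b in s, w b ≤ ∫ b in t, w b :=
    setIntegral_mono_set hw.integrableOn (ae_of_all _ hnonneg) hst.eventuallyLE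
  have hIic : Measurable fun a : ℝ => ∫ b in Iic a, w b :=
    Monotone.measurable fun _ _ h => hmono (Iic_subset_Iic.2 h)
  have hIoi : Measurable fun a : ℝ => ∫ b in Ioi a, w b :=
    Antitone.measurable fun _ _ h => hmono (Ioi_subset_Ioi h)
  exact (hIic.mul hIoi).div hmeas

theorem crossingDensity_nonneg {w : ℝ → ℝ} (hnonneg : ∀ b, 0 ≤ w b) (a : ℝ) :
    0 ≤ crossingDensity w a :=
  div_nonneg (mul_nonneg (integral_nonneg hnonneg) (integral_nonneg hnonneg)) (hnonneg a)

namespace IsDecayingWeight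

variable {C : ℝ} {ρ w : ℝ → ℝ}

theorem le_exp_neg_mul_abs (hw : IsDecayingWeight C ρ w) (b : ℝ) :
    w b ≤ C * Real.exp (-(ρ 0 * |b|)) := by
  calc w b ≤ w 0 * (C * Real.exp (-(ρ 0 * |b|))) := by
        simpa [apply_abs_of_even hw.even] using hw.map_add_le 0 |b| le_rfl (abs_nonneg b)
    _ ≤ C * Real.exp (-(ρ 0 * |b|)) :=
        mul_le_of_le_one_left (mul_nonneg hw.const_nonneg (Real.exp_pos _).le) hw.map_zero_le

theorem integrable_bound (hw : IsDecayingWeight C ρ w) :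
    Integrable fun b : ℝ => C * Real.exp (-(ρ 0 * |b|)) :=
  (integrable_exp_neg_mul_abs (hw.rate_pos 0 le_rfl)).const_mul C

theorem norm_le_bound (hw : IsDecayingWeight C ρ w) (b : ℝ) :
    ‖w b‖ ≤ C * Real.exp (-(ρ 0 * |b|)) :=
  (Real.norm_of_nonneg (hw.nonneg b)).trans_le (hw.le_exp_neg_mul_abs b)

theorem integrable (hw : IsDecayingWeight C ρ w) : Integrable w :=
  hw.integrable_bound.mono' hw.measurable.aestronglyMeasurable (ae_of_all _ hw.norm_le_bound)

theorem setIntegral_Ioi_le (hw : IsDecayingWeight C ρ w) {a : ℝ} (ha : 0 ≤ a) :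
    ∫ b in Ioi a, w b ≤ C * (ρ a)⁻¹ * w a := by
  have hρ := hw.rate_pos a ha
  calc ∫ b in Ioi a, w b ≤ ∫ b in Ioi a, w a * C * Real.exp (-(ρ a * (b - a))) := by
        refine setIntegral_mono_on hw.integrable.integrableOn
          ((integrableOn_Ioi_exp_neg_mul_sub hρ a).const_mul _) measurableSet_Ioi fun b hb => ?_
        simpa [mul_assoc] using hw.map_add_le a (b - a) ha (sub_nonneg.2 (mem_Ioi.1 hb).le)
    _ = C * (ρ a)⁻¹ * w a := by
        rw [MeasureTheory.integral_const_mul, setIntegral_Ioi_exp_neg_mul_sub hρ]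
        ring

theorem norm_crossingDensity_le (hw : IsDecayingWeight C ρ w) {a : ℝ} (ha : 0 ≤ a) :
    ‖crossingDensity w a‖ ≤ (∫ b, C * Real.exp (-(ρ 0 * |b|))) * (C * (ρ a)⁻¹) := by
  have hhead : ∫ b in Iic a, w b ≤ ∫ b, C * Real.exp (-(ρ 0 * |b|)) :=
    (setIntegral_le_integral hw.integrable (ae_of_all _ hw.nonneg)).trans
      (integral_mono hw.integrable hw.integrable_bound hw.le_exp_neg_mul_abs)
  have hrate : 0 ≤ C * (ρ a)⁻¹ := mul_nonneg hw.const_nonneg (inv_pos.2 (hw.rate_pos a ha)).le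
  have htail : (∫ b in Ioi a, w b) / w a ≤ C * (ρ a)⁻¹ :=
    div_le_of_le_mul₀ (hw.nonneg a) hrate (hw.setIntegral_Ioi_le ha)
  rw [Real.norm_of_nonneg (crossingDensity_nonneg hw.nonneg a), crossingDensity, mul_div_assoc]
  exact mul_le_mul hhead htail (div_nonneg (integral_nonneg hw.nonneg) (hw.nonneg a))
    ((integral_nonneg hw.nonneg).trans hhead)

theorem integrableOn_crossingDensity (hw : IsDecayingWeight C ρ w)
    (hρ : IntegrableOn (fun a => (ρ a)⁻¹) (Ioi 0)) :
    IntegrableOn (crossingDensity w) (Ioi 0) := by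
  refine ((hρ.const_mul C).const_mul (∫ b, C * Real.exp (-(ρ 0 * |b|)))).mono'
    (measurable_crossingDensity hw.integrable hw.measurable hw.nonneg).aestronglyMeasurable ?_
  exact (ae_restrict_iff' measurableSet_Ioi).2
    (ae_of_all _ fun a ha => hw.norm_crossingDensity_le (mem_Ioi.1 ha).le)

theorem meanCrossingTime_pos (hw : IsDecayingWeight C ρ w)
    (hρ : IntegrableOn (fun a => (ρ a)⁻¹) (Ioi 0)) (hpos : ∀ b, 0 < w b) :
    0 < meanCrossingTime w := by
  have hmass {s : Set ℝ} (hs : volume s ≠ 0) : 0 < ∫ b in s, w b :=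
    setIntegral_pos_of_forall_pos hs hw.integrable.integrableOn hpos
  have hdensity : 0 < ∫ a in Ioi 0, crossingDensity w a :=
    setIntegral_pos_of_forall_pos (by simp) (hw.integrableOn_crossingDensity hρ) fun a =>
      div_pos (mul_pos (hmass (by simp)) (hmass (by simp))) (hpos a)
  have htotal : 0 < ∫ b, w b := by simpa using hmass (s := univ) (by simp)
  rw [meanCrossingTime_of_even hw.even]
  positivity

variable {ι : Type*} {F : Filter ι} {w : ι → ℝ → ℝ} {v : ℝ → ℝ}

theorem of_tendsto [F.NeBot] (hw : ∀ᶠ i in F, IsDecayingWeight C ρ (w i)) (hv : Measurable v)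
    (hlim : ∀ b, Tendsto (fun i => w i b) F (𝓝 (v b))) : IsDecayingWeight C ρ v where
  const_nonneg := hw.exists.choose_spec.const_nonneg
  rate_pos := hw.exists.choose_spec.rate_pos
  measurable := hv
  nonneg b := ge_of_tendsto (hlim b) (hw.mono fun _ h => h.nonneg b)
  even b := tendsto_nhds_unique (hlim (-b))
    ((hlim b).congr' (hw.mono fun _ h => (h.even b).symm))
  map_zero_le := le_of_tendsto (hlim 0) (hw.mono fun _ h => h.map_zero_le)
  map_add_le a u ha hu := le_of_tendsto_of_tendsto (hlim (a + u)) ((hlim a).mul_const _)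
    (hw.mono fun _ h => h.map_add_le a u ha hu)

theorem tendsto_setIntegral [F.IsCountablyGenerated]
    (hw : ∀ᶠ i in F, IsDecayingWeight C ρ (w i))
    (hlim : ∀ b, Tendsto (fun i => w i b) F (𝓝 (v b))) (s : Set ℝ) :
    Tendsto (fun i => ∫ b in s, w i b) F (𝓝 (∫ b in s, v b)) := by
  rcases F.eq_or_neBot with rfl | _
  · exact tendsto_bot
  exact tendsto_integral_filter_of_dominated_convergence (fun b => C * Real.exp (-(ρ 0 * |b|)))
    (hw.mono fun _ h => h.measurable.aestronglyMeasurable)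
    (hw.mono fun _ h => ae_of_all _ h.norm_le_bound)
    hw.exists.choose_spec.integrable_bound.integrableOn (ae_of_all _ hlim)

theorem tendsto_meanCrossingTime [F.IsCountablyGenerated]
    (hw : ∀ᶠ i in F, IsDecayingWeight C ρ (w i))
    (hρ : IntegrableOn (fun a => (ρ a)⁻¹) (Ioi 0)) (hv : IsDecayingWeight C ρ v)
    (hpos : ∀ b, 0 < v b) (hlim : ∀ b, Tendsto (fun i => w i b) F (𝓝 (v b))) :
    Tendsto (fun i => meanCrossingTime (w i)) F (𝓝 (meanCrossingTime v)) := by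
  have hset := tendsto_setIntegral hw hlim
  have htotal : Tendsto (fun i => ∫ b, w i b) F (𝓝 (∫ b, v b)) := by simpa using hset univ
  have htotal_pos : 0 < ∫ b, v b := by
    simpa using setIntegral_pos_of_forall_pos (s := univ) (by simp) hv.integrable.integrableOn hpos
  have hdensity : Tendsto (fun i => ∫ a in Ioi 0, crossingDensity (w i) a) F
      (𝓝 (∫ a in Ioi 0, crossingDensity v a)) := by
    refine tendsto_integral_filter_of_dominated_convergence
      (fun a => (∫ b, C * Real.exp (-(ρ 0 * |b|))) * (C * (ρ a)⁻¹))
      (hw.mono fun i h => ?_) (hw.mono fun i h => ?_) ((hρ.const_mul C).const_mul _)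
      (ae_of_all _ fun a => ((hset _).mul (hset _)).div (hlim a) (hpos a).ne')
    · exact (measurable_crossingDensity h.integrable h.measurable h.nonneg).aestronglyMeasurable
    · exact (ae_restrict_iff' measurableSet_Ioi).2
        (ae_of_all _ fun a ha => h.norm_crossingDensity_le (mem_Ioi.1 ha).le)
  rw [meanCrossingTime_of_even hv.even]
  exact ((hdensity.const_mul 2).div htotal htotal_pos.ne').congr'
    (hw.mono fun i h => (meanCrossingTime_of_even h.even).symm)

end IsDecayingWeight

theorem isDecayingWeight_of_antitoneOn {w : ℝ → ℝ} {c q : ℝ} (hc : 0 < c) (hq : 0 ≤ q)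
    (hnonneg : ∀ b, 0 ≤ w b) (heven : w.Even) (hw0 : w 0 ≤ 1) (hanti : AntitoneOn w (Ici 0))
    (hdecay : ∀ x y, 0 < x → x ≤ y → w y ≤ w x * Real.exp (-(c * ((y - x) * x ^ q)))) :
    IsDecayingWeight (Real.exp c) (fun a => c * max 1 (a ^ q)) w where
  const_nonneg := (Real.exp_pos c).le
  rate_pos _ _ := mul_pos hc (lt_max_of_lt_left one_pos)
  measurable := by
    have hcomp : Antitone fun b => w (max 0 b) := fun x y hxy =>
      hanti (le_max_left 0 x) (le_max_left 0 y) (max_le_max_left 0 hxy)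
    have hfold : w = fun b => w (max 0 |b|) := by
      ext b
      rw [max_eq_right (abs_nonneg b), apply_abs_of_even heven]
    rw [hfold]
    exact hcomp.measurable.comp continuous_abs.measurable
  nonneg := hnonneg
  even := heven
  map_zero_le := hw0
  map_add_le a u ha hu := by
    rw [← Real.exp_add]
    rcases le_total 1 a with ha1 | ha1
    · rw [max_eq_right (Real.one_le_rpow ha1 hq)]
      refine (hdecay a (a + u) (by linarith) (by linarith)).trans ?_
      gcongr
      · exact hnonneg a
      · rw [add_sub_cancel_left]
        linarith [mul_assoc c (a ^ q) u, mul_comm u (a ^ q)]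
    rw [max_eq_left (Real.rpow_le_one ha ha1 hq)]
    rcases le_total (a + u) 1 with hau | hau
    · refine (hanti ha (add_nonneg ha hu) (by linarith)).trans ?_
      refine le_mul_of_one_le_right (hnonneg a) (Real.one_le_exp ?_)
      nlinarith
    · calc w (a + u) ≤ w 1 * Real.exp (-(c * ((a + u - 1) * 1 ^ q))) := hdecay 1 _ one_pos hau
        _ ≤ w a * Real.exp (c + -(c * 1 * u)) := by
          gcongr
          · exact hnonneg a
          · exact hanti ha (mem_Ici.2 zero_le_one) ha1
          · rw [Real.one_rpow]
            nlinarith [mul_nonneg hc.le ha]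

theorem integrableOn_Ioi_inv_max_one_rpow {q : ℝ} (hq : 1 < q) :
    IntegrableOn (fun a : ℝ => (max 1 (a ^ q))⁻¹) (Ioi 0) := by
  rw [← Ioc_union_Ioi_eq_Ioi zero_le_one]
  refine IntegrableOn.union ?_ ?_
  · refine (integrableOn_const (C := (1 : ℝ)) (by simp)).congr_fun (fun a ha => ?_)
      measurableSet_Ioc
    simp [max_eq_left (Real.rpow_le_one ha.1.le ha.2 (by linarith))]
  · refine (integrableOn_Ioi_rpow_of_lt (neg_lt_neg hq) one_pos).congr_fun (fun a ha => ?_)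
      measurableSet_Ioi
    have ha1 : 1 < a := ha
    simp only
    rw [max_eq_right (Real.one_le_rpow ha1.le (by linarith)), Real.rpow_neg (by linarith)]

/-- The function `h₁` of the paper, with `p` in place of `2k`. -/
def expPowMass (p x : ℝ) : ℝ :=
  ∫ a in Iic x, Real.exp (-|a| ^ p)

/-- The constant `C(2k)` of the paper, with `p` in place of `2k`. -/
def crossingConstant (p : ℝ) : ℝ :=
  ∫ a in Ioi 0, expPowMass p a * expPowMass p (-a) * Real.exp (a ^ p)

theorem setIntegral_Ioi_crossingDensity_exp_neg_abs_rpow (p : ℝ) :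
    ∫ a in Ioi 0, crossingDensity (fun b => Real.exp (-|b| ^ p)) a = crossingConstant p := by
  refine setIntegral_congr_fun measurableSet_Ioi fun a ha => ?_
  have heven : Function.Even fun b : ℝ => Real.exp (-|b| ^ p) := fun b => by simp
  simp only [crossingDensity]
  rw [← setIntegral_Iic_neg_of_even heven, abs_of_pos ha, Real.exp_neg, div_inv_eq_mul]
  rfl

theorem meanCrossingTime_exp_neg_abs_rpow {p : ℝ} (hp : 0 < p) :
    meanCrossingTime (fun b => Real.exp (-|b| ^ p))
      = p * crossingConstant p / Real.Gamma (1 / p) := by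
  have hmass : ∫ b, Real.exp (-|b| ^ p) = 2 * (1 / p * Real.Gamma (1 / p)) := by
    rw [integral_comp_abs (f := fun b => Real.exp (-b ^ p)), integral_exp_neg_rpow hp,
      Real.Gamma_add_one (one_div_ne_zero hp.ne')]
  rw [meanCrossingTime_of_even fun b => by simp, hmass,
    setIntegral_Ioi_crossingDensity_exp_neg_abs_rpow]
  field_simp

theorem abs_rpow_two_mul_natCast (a : ℝ) (k : ℕ) : |a| ^ (2 * k : ℝ) = a ^ (2 * k) := by
  rw [← Nat.cast_two, ← Nat.cast_mul, Real.rpow_natCast, (even_two_mul k).pow_abs]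

theorem expPowMass_two_mul_natCast (k : ℕ) (x : ℝ) :
    expPowMass (2 * k) x = ∫ a in Iic x, Real.exp (-(a ^ (2 * k))) := by
  simp only [expPowMass, abs_rpow_two_mul_natCast]

theorem crossingConstant_two_mul_natCast (k : ℕ) :
    crossingConstant (2 * k)
      = ∫ a in Ioi 0, expPowMass (2 * k) a * expPowMass (2 * k) (-a) * Real.exp (a ^ (2 * k)) := by
  refine setIntegral_congr_fun measurableSet_Ioi fun a ha => ?_
  simp only [← abs_rpow_two_mul_natCast a, abs_of_pos (mem_Ioi.1 ha)]

/-- A normalised symmetric peak `g` on `(-l, l)`, extended by zero, with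
`g h = 1 - (|h| / A) ^ p + o(|h| ^ p)` at `0`. -/
structure IsFlatProfile (g : ℝ → ℝ) (l A p : ℝ) : Prop where
  radius_pos : 0 < l
  scale_pos : 0 < A
  even : g.Even
  pos : ∀ x ∈ Ioo (-l) l, 0 < g x
  eq_zero : ∀ x ∉ Ioo (-l) l, g x = 0
  concaveOn : ConcaveOn ℝ (Ioo (-l) l) g
  map_zero : g 0 = 1
  tendsto : Tendsto (fun h => (1 - g h) / |h| ^ p) (𝓝[≠] 0) (𝓝 (1 / A ^ p))

theorem natCast_mul_div_rpow_inv_rpow {A p : ℝ} (hA : 0 ≤ A) (hp : p ≠ 0) {m : ℕ} (hm : m ≠ 0) :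
    m * (A / (m : ℝ) ^ p⁻¹) ^ p = A ^ p := by
  rw [Real.div_rpow hA (by positivity), Real.rpow_inv_rpow (by positivity) hp]
  field_simp

namespace IsFlatProfile

variable {g : ℝ → ℝ} {l A p : ℝ}

theorem nonneg (hg : IsFlatProfile g l A p) (x : ℝ) : 0 ≤ g x := by
  by_cases hx : x ∈ Ioo (-l) l
  · exact (hg.pos x hx).le
  · exact (hg.eq_zero x hx).ge

theorem antitoneOn (hg : IsFlatProfile g l A p) : AntitoneOn g (Ici 0) := by
  intro x hx y _ hxy
  by_cases hy : y ∈ Ioo (-l) l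
  · have hyneg : -y ∈ Ioo (-l) l := ⟨neg_lt_neg hy.2, neg_lt.1 hy.1⟩
    have hxmem : x ∈ Icc (-y) y := ⟨by linarith [mem_Ici.1 hx], hxy⟩
    simpa [hg.even.eq] using hg.concaveOn.min_le_of_mem_Icc hyneg hy hxmem
  · rw [hg.eq_zero y hy]
    exact hg.nonneg x

theorem exists_mul_rpow_le (hg : IsFlatProfile g l A p) :
    ∃ κ > 0, ∀ x ∈ Ioo 0 l, κ * x ^ p ≤ 1 - g x := by
  have hl := hg.radius_pos
  have hA := hg.scale_pos
  set q := 1 / A ^ p / 2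
  have hnear : ∀ᶠ h in 𝓝[>] 0, q < (1 - g h) / |h| ^ p :=
    (hg.tendsto.eventually (lt_mem_nhds (half_lt_self (by positivity))))
      |>.filter_mono (nhdsGT_le_nhdsNE 0)
  obtain ⟨d, hd, hsub⟩ := (mem_nhdsGT_iff_exists_mem_Ioc_Ioo_subset hl).1 hnear
  have hd0 : 0 < d := hd.1
  refine ⟨q * (d / l) ^ p, by positivity, fun x hx => ?_⟩
  have hx0 : 0 < x := hx.1
  have hshrink : d / l * x ∈ Ioo 0 d := by
    refine ⟨by positivity, ?_⟩
    rw [div_mul_eq_mul_div, div_lt_iff₀ hl]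
    exact mul_lt_mul_of_pos_left hx.2 hd0
  have hle : d / l * x ≤ x := mul_le_of_le_one_left hx0.le ((div_le_one hl).2 hd.2)
  calc q * (d / l) ^ p * x ^ p = q * |d / l * x| ^ p := by
        rw [abs_of_pos hshrink.1, Real.mul_rpow (by positivity) hx0.le, mul_assoc]
    _ ≤ 1 - g (d / l * x) :=
        ((lt_div_iff₀ (by rw [abs_of_pos hshrink.1]; exact Real.rpow_pos_of_pos hshrink.1 p)).1
          (hsub hshrink)).le
    _ ≤ 1 - g x := sub_le_sub_left (hg.antitoneOn hshrink.1.le hx0.le hle) 1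

/- The slope of the concave function `g` beyond `x` is at most that of the chord from `0` to `x`,
which is of order `-x ^ (p - 1)`. -/
theorem exists_le_mul_exp (hg : IsFlatProfile g l A p) :
    ∃ κ > 0, ∀ x y, 0 < x → x ≤ y → g y ≤ g x * Real.exp (-(κ * ((y - x) * x ^ (p - 1)))) := by
  obtain ⟨κ, hκ, hchord⟩ := hg.exists_mul_rpow_le
  refine ⟨κ, hκ, fun x y hx hxy => ?_⟩
  rcases hxy.eq_or_lt with rfl | hxy
  · simp
  rcases le_or_gt l y with hly | hyl
  · rw [hg.eq_zero y fun h => hly.not_gt h.2]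
    exact mul_nonneg (hg.nonneg x) (Real.exp_pos _).le
  have hslope : (g y - g x) / (y - x) ≤ -(κ * x ^ (p - 1)) :=
    calc (g y - g x) / (y - x) ≤ (g x - g 0) / (x - 0) :=
          hg.concaveOn.slope_anti_adjacent (by constructor <;> linarith)
            (by constructor <;> linarith) hx hxy
      _ ≤ -(κ * x ^ p) / x := by
          rw [hg.map_zero, sub_zero]
          gcongr
          linarith [hchord x ⟨hx, hxy.trans hyl⟩]
      _ = -(κ * x ^ (p - 1)) := by rw [Real.rpow_sub_one hx.ne']; ring
  rw [div_le_iff₀ (sub_pos.2 hxy)] at hslope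
  set t := κ * ((y - x) * x ^ (p - 1))
  have ht0 : 0 ≤ t := mul_nonneg hκ.le (mul_nonneg (sub_pos.2 hxy).le (Real.rpow_nonneg hx.le _))
  have hgx : g x ≤ 1 := hg.map_zero ▸ hg.antitoneOn (mem_Ici.2 le_rfl) hx.le hx.le
  calc g y ≤ g x - t := by linarith
    _ ≤ g x * (-t + 1) := by nlinarith
    _ ≤ g x * Real.exp (-t) := mul_le_mul_of_nonneg_left (Real.add_one_le_exp _) (hg.nonneg x)

theorem tendsto_pow (hg : IsFlatProfile g l A p) (hp : p ≠ 0) {e : ℕ → ℝ}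
    (he : Tendsto e atTop (𝓝[>] 0)) (hscale : ∀ᶠ m : ℕ in atTop, m * e m ^ p = A ^ p) (b : ℝ) :
    Tendsto (fun m => g (e m * b) ^ m) atTop (𝓝 (Real.exp (-|b| ^ p))) := by
  have hA := hg.scale_pos
  rcases eq_or_ne b 0 with rfl | hb
  · simp [hg.map_zero, hp]
  obtain ⟨he0, hepos⟩ := tendsto_nhdsWithin_iff.1 he
  have hbase : Tendsto (fun m => e m * b) atTop (𝓝[≠] 0) :=
    tendsto_nhdsWithin_iff.2 ⟨by simpa using he0.mul_const b,
      hepos.mono fun m hm => mul_ne_zero (mem_Ioi.1 hm).ne' hb⟩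
  have hdefect : Tendsto (fun m : ℕ => (m : ℝ) * (g (e m * b) - 1)) atTop (𝓝 (-|b| ^ p)) := by
    have hlim := ((hg.tendsto.comp hbase).mul_const (A ^ p * |b| ^ p)).neg
    have hval : -(1 / A ^ p * (A ^ p * |b| ^ p)) = -|b| ^ p := by field_simp
    rw [hval] at hlim
    refine hlim.congr' ?_
    filter_upwards [hscale, hepos] with m hm hem
    have hem : 0 < e m := hem
    simp only [Function.comp_apply]
    rw [← hm, abs_mul, abs_of_pos hem, Real.mul_rpow hem.le (abs_nonneg b)]
    field_simp
    ring
  simpa using Real.tendsto_one_add_pow_exp_of_tendsto hdefect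

theorem exists_isDecayingWeight_pow (hg : IsFlatProfile g l A p) (hp : 1 ≤ p) :
    ∃ c > 0, ∀ (m : ℕ) (e : ℝ), 0 < e → m * e ^ p = A ^ p →
      IsDecayingWeight (Real.exp c) (fun a => c * max 1 (a ^ (p - 1)))
        (fun b => g (e * b) ^ m) := by
  have hA := hg.scale_pos
  obtain ⟨κ, hκ, hdecay⟩ := hg.exists_le_mul_exp
  refine ⟨κ * A ^ p, by positivity, fun m e he hscale => ?_⟩
  refine isDecayingWeight_of_antitoneOn (by positivity) (by linarith)
    (fun b => pow_nonneg (hg.nonneg _) m) (fun b => by simp [hg.even.eq]) (by simp [hg.map_zero])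
    (fun x hx y hy hxy => ?_) fun x y hx hxy => ?_
  · refine pow_le_pow_left₀ (hg.nonneg _) (hg.antitoneOn ?_ ?_ ?_) m
    · exact mul_nonneg he.le hx
    · exact mul_nonneg he.le hy
    · exact mul_le_mul_of_nonneg_left hxy he.le
  · have hexponent : m * -(κ * ((e * y - e * x) * (e * x) ^ (p - 1)))
        = -(κ * A ^ p * ((y - x) * x ^ (p - 1))) := by
      rw [← hscale, Real.mul_rpow he.le hx.le, Real.rpow_sub_one he.ne']
      field_simp
    calc g (e * y) ^ m
        ≤ (g (e * x) * Real.exp (-(κ * ((e * y - e * x) * (e * x) ^ (p - 1))))) ^ m :=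
          pow_le_pow_left₀ (hg.nonneg _)
            (hdecay _ _ (mul_pos he hx) (mul_le_mul_of_nonneg_left hxy he.le)) m
      _ = g (e * x) ^ m * Real.exp (-(κ * A ^ p * ((y - x) * x ^ (p - 1)))) := by
          rw [mul_pow, ← Real.exp_nat_mul, hexponent]

theorem integrable_pow (hg : IsFlatProfile g l A p) (hp : 1 ≤ p) {m : ℕ} (hm : m ≠ 0) :
    Integrable fun h => g h ^ m := by
  have he : 0 < A / (m : ℝ) ^ p⁻¹ := div_pos hg.scale_pos (by positivity)
  obtain ⟨c, -, hweight⟩ := hg.exists_isDecayingWeight_pow hp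
  exact (integrable_comp_mul_left_iff (fun h => g h ^ m) he.ne').1
    (hweight m _ he (natCast_mul_div_rpow_inv_rpow hg.scale_pos.le (by linarith) hm)).integrable

theorem isEquivalent_meanCrossingTime_comp_mul_pow (hg : IsFlatProfile g l A p) (hp : 2 < p)
    {e : ℕ → ℝ} (he : Tendsto e atTop (𝓝[>] 0))
    (hscale : ∀ᶠ m : ℕ in atTop, m * e m ^ p = A ^ p) :
    (fun m => meanCrossingTime fun b => g (e m * b) ^ m) ~[atTop]
      fun _ => p * crossingConstant p / Real.Gamma (1 / p) := by
  have hp0 : 0 < p := by linarith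
  obtain ⟨c, -, hweight⟩ := hg.exists_isDecayingWeight_pow (by linarith)
  have hdecay : ∀ᶠ m in atTop, IsDecayingWeight (Real.exp c)
      (fun a => c * max 1 (a ^ (p - 1))) fun b => g (e m * b) ^ m := by
    filter_upwards [(tendsto_nhdsWithin_iff.1 he).2, hscale] with m hem hm using hweight m _ hem hm
  have hlim := hg.tendsto_pow hp0.ne' he hscale
  have hdecay_lim := IsDecayingWeight.of_tendsto hdecay (by fun_prop) hlim
  have hrate : IntegrableOn (fun a : ℝ => (c * max 1 (a ^ (p - 1)))⁻¹) (Ioi 0) := by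
    simp only [mul_inv]
    exact Integrable.const_mul (integrableOn_Ioi_inv_max_one_rpow (by linarith)) c⁻¹
  have hpos (b : ℝ) : 0 < Real.exp (-|b| ^ p) := Real.exp_pos _
  rw [← meanCrossingTime_exp_neg_abs_rpow hp0]
  exact (isEquivalent_const_iff_tendsto (hdecay_lim.meanCrossingTime_pos hrate hpos).ne').2
    (IsDecayingWeight.tendsto_meanCrossingTime hdecay hrate hdecay_lim hpos hlim)

theorem isEquivalent_meanCrossingTime_pow (hg : IsFlatProfile g l A p) (hp : 2 < p) :
    (fun m : ℕ => meanCrossingTime fun h => g h ^ m) ~[atTop]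
      fun m => p * crossingConstant p * A ^ 2 / ((m : ℝ) ^ (2 / p) * Real.Gamma (1 / p)) := by
  have hA := hg.scale_pos
  have hp0 : 0 < p := by linarith
  set e : ℕ → ℝ := fun m => A / (m : ℝ) ^ p⁻¹ with he_def
  have hepos : ∀ᶠ m in atTop, 0 < e m :=
    (eventually_ne_atTop 0).mono fun m hm => div_pos hA (by positivity)
  have he : Tendsto e atTop (𝓝[>] 0) := tendsto_nhdsWithin_iff.2
    ⟨((tendsto_rpow_atTop (inv_pos.2 hp0)).comp tendsto_natCast_atTop_atTop).const_div_atTop A,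
      hepos⟩
  have hscale : ∀ᶠ m : ℕ in atTop, m * e m ^ p = A ^ p :=
    (eventually_ne_atTop 0).mono fun m => natCast_mul_div_rpow_inv_rpow hA.le hp0.ne'
  have hrescaled := hg.isEquivalent_meanCrossingTime_comp_mul_pow hp he hscale
  refine ((IsEquivalent.refl (u := fun m => e m ^ 2)).mul hrescaled).congr_left ?_ |>.congr_right ?_
  · filter_upwards [hepos] with m hm
    have haffine := meanCrossingTime_const_mul_comp_affine (fun h => g h ^ m) one_ne_zero 0 hm
    simp only [one_mul, zero_add] at haffine
    simp only [Pi.mul_apply, haffine]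
    field_simp
  · refine Eventually.of_forall fun m => ?_
    simp only [Pi.mul_apply, he_def, div_pow]
    rw [← Real.rpow_mul_natCast (Nat.cast_nonneg m), Nat.cast_two, inv_mul_eq_div]
    ring

end IsFlatProfile

/-- The function `f` on `(0, L)`, centred at `L / 2`, normalised to `1` there and extended by
zero. -/
def peakProfile (f : ℝ → ℝ) (L h : ℝ) : ℝ :=
  (Ioo 0 L).indicator f (L / 2 + h) / f (L / 2)

section PeakProfile

variable {f : ℝ → ℝ} {L : ℝ}

theorem half_add_mem_Ioo_iff {h : ℝ} : L / 2 + h ∈ Ioo 0 L ↔ h ∈ Ioo (-(L / 2)) (L / 2) := by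
  simp only [mem_Ioo]
  constructor <;> rintro ⟨h₁, h₂⟩ <;> constructor <;> linarith

theorem peakProfile_of_mem {h : ℝ} (hh : h ∈ Ioo (-(L / 2)) (L / 2)) :
    peakProfile f L h = f (L / 2 + h) / f (L / 2) := by
  rw [peakProfile, indicator_of_mem (half_add_mem_Ioo_iff.2 hh)]

theorem peakProfile_of_notMem {h : ℝ} (hh : h ∉ Ioo (-(L / 2)) (L / 2)) :
    peakProfile f L h = 0 := by
  rw [peakProfile, indicator_of_notMem (half_add_mem_Ioo_iff.not.2 hh), zero_div]

theorem peakProfile_even (hsym : ∀ s ∈ Ioo 0 L, f (L - s) = f s) : (peakProfile f L).Even := by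
  intro h
  by_cases hh : h ∈ Ioo (-(L / 2)) (L / 2)
  · rw [peakProfile_of_mem hh, peakProfile_of_mem (by simpa [and_comm, neg_lt] using hh),
      ← hsym _ (half_add_mem_Ioo_iff.2 hh)]
    ring_nf
  · rw [peakProfile_of_notMem hh, peakProfile_of_notMem (by simpa [and_comm, neg_lt] using hh)]

theorem concaveOn_peakProfile (hconc : ConcaveOn ℝ (Ioo 0 L) f) (hM : 0 ≤ f (L / 2)) :
    ConcaveOn ℝ (Ioo (-(L / 2)) (L / 2)) (peakProfile f L) := by
  have hshift := (hconc.translate_right (L / 2)).smul (inv_nonneg.2 hM)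
  have hpre : (fun h => L / 2 + h) ⁻¹' Ioo 0 L = Ioo (-(L / 2)) (L / 2) :=
    Set.ext fun _ => half_add_mem_Ioo_iff
  rw [hpre] at hshift
  refine hshift.congr fun h hh => ?_
  simp [peakProfile_of_mem hh, div_eq_inv_mul]

theorem tendsto_one_sub_peakProfile_div {D p : ℝ} (hL : 0 < L) (hM : f (L / 2) ≠ 0)
    (hexp : (fun h => f (L / 2 + h) - f (L / 2) + D * |h| ^ p) =o[𝓝 0] fun h => |h| ^ p) :
    Tendsto (fun h => (1 - peakProfile f L h) / |h| ^ p) (𝓝[≠] 0) (𝓝 (D / f (L / 2))) := by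
  have hlim := ((hexp.tendsto_div_nhds_zero.mono_left
    (nhdsWithin_le_nhds (s := {0}ᶜ))).const_sub D).div_const (f (L / 2))
  rw [sub_zero] at hlim
  refine hlim.congr' ?_
  have hnear : ∀ᶠ h in 𝓝[≠] 0, h ∈ Ioo (-(L / 2)) (L / 2) :=
    nhdsWithin_le_nhds (Ioo_mem_nhds (by linarith) (by linarith))
  filter_upwards [hnear, self_mem_nhdsWithin] with h hh hne
  have habs : 0 < |h| ^ p := Real.rpow_pos_of_pos (abs_pos.2 hne) p
  rw [peakProfile_of_mem hh]
  field_simp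
  ring

theorem isFlatProfile_peakProfile {D p : ℝ} (hL : 0 < L) (hp : p ≠ 0)
    (hconc : ConcaveOn ℝ (Ioo 0 L) f) (hpos : ∀ s ∈ Ioo 0 L, 0 < f s)
    (hsym : ∀ s ∈ Ioo 0 L, f (L - s) = f s) (hD : 0 < D)
    (hexp : (fun h => f (L / 2 + h) - f (L / 2) + D * |h| ^ p) =o[𝓝 0] fun h => |h| ^ p) :
    IsFlatProfile (peakProfile f L) (L / 2) ((f (L / 2) / D) ^ (1 / p)) p := by
  have hM : 0 < f (L / 2) := hpos _ ⟨by linarith, by linarith⟩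
  refine ⟨by linarith, by positivity, peakProfile_even hsym, fun h hh => ?_,
    fun h => peakProfile_of_notMem, concaveOn_peakProfile hconc hM.le, ?_, ?_⟩
  · rw [peakProfile_of_mem hh]
    exact div_pos (hpos _ (half_add_mem_Ioo_iff.2 hh)) hM
  · rw [peakProfile_of_mem (by constructor <;> linarith), add_zero, div_self hM.ne']
  · rw [one_div p, Real.rpow_inv_rpow (by positivity) hp, one_div_div]
    exact tendsto_one_sub_peakProfile_div hL hM.ne' hexp

theorem meanHittingTime_pow_eq_meanCrossingTime_peakProfile (hL : 0 ≤ L) (hM : f (L / 2) ≠ 0)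
    {m : ℕ} (hm : m ≠ 0) (hint : Integrable fun h => peakProfile f L h ^ m) :
    meanHittingTime (fun s => f s ^ m) L = meanCrossingTime fun h => peakProfile f L h ^ m := by
  have hpeak (h : ℝ) : peakProfile f L h ^ m
      = (f (L / 2) ^ m)⁻¹ * (Ioo 0 L).indicator (fun s => f s ^ m) (L / 2 + 1 * h) := by
    by_cases hh : h ∈ Ioo (-(L / 2)) (L / 2)
    · rw [peakProfile_of_mem hh, one_mul, indicator_of_mem (half_add_mem_Ioo_iff.2 hh), div_pow,
        div_eq_inv_mul]
    · rw [peakProfile_of_notMem hh, one_mul, indicator_of_notMem (half_add_mem_Ioo_iff.not.2 hh),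
        zero_pow hm, mul_zero]
  have hint' : IntegrableOn (fun s => f s ^ m) (Ioo 0 L) := by
    rw [← integrable_indicator_iff measurableSet_Ioo]
    refine ((hint.comp_sub_right (L / 2)).const_mul (f (L / 2) ^ m)).congr (ae_of_all _ fun s => ?_)
    simp [hpeak, hM]
  simp only [hpeak]
  rw [meanCrossingTime_const_mul_comp_affine _ (by positivity) _ one_pos,
    meanCrossingTime_indicator_Ioo hL hint']
  simp

end PeakProfile

theorem isEquivalent_natCast_pred_rpow (r : ℝ) :
    (fun n : ℕ => ((n - 1 : ℕ) : ℝ) ^ r) ~[atTop] fun n => (n : ℝ) ^ r := by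
  have hpred : (fun n : ℕ => ((n - 1 : ℕ) : ℝ)) ~[atTop] fun n => (n : ℝ) := by
    have hsub : (fun n : ℕ => (n : ℝ) - 1) ~[atTop] fun n => (n : ℝ) :=
      IsEquivalent.refl.sub_isLittleO (isLittleO_const_left.2 (Or.inr
        (tendsto_norm_atTop_atTop.comp tendsto_natCast_atTop_atTop)))
    refine hsub.congr_left ?_
    filter_upwards [eventually_ge_atTop 1] with n hn using (Nat.cast_pred hn).symm
  exact hpred.rpow fun n => Nat.cast_nonneg n

theorem concaveOn_of_eventually_cofinite_deriv2_nonpos {f : ℝ → ℝ} {s : Set ℝ} (hs : Convex ℝ s)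
    (hf : ContDiff ℝ 2 f) (hf'' : ∀ᶠ x in cofinite, x ∈ s → deriv (deriv f) x ≤ 0) :
    ConcaveOn ℝ s f := by
  have hf' : ContDiff ℝ 1 (deriv f) := hf.iterate_deriv' 1 1
  refine concaveOn_of_deriv2_nonpos hs hf.continuous.continuousOn
    (hf.differentiable two_ne_zero).differentiableOn
    (hf'.differentiable one_ne_zero).differentiableOn fun x hx => ?_
  have hcont : Tendsto (deriv (deriv f)) (𝓝[≠] x) (𝓝 (deriv (deriv f) x)) :=
    (hf'.continuous_deriv le_rfl).continuousWithinAt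
  refine le_of_tendsto hcont ?_
  filter_upwards [nhdsNE_le_cofinite x hf'', nhdsWithin_le_nhds (mem_interior_iff_mem_nhds.1 hx)]
    with y hy hys using hy hys

theorem mean_asymptotic_degenerate_general {f : ℝ → ℝ} {L D p : ℝ} (hL : 0 < L) (hp : 2 < p)
    (hconc : ConcaveOn ℝ (Ioo 0 L) f) (hpos : ∀ s ∈ Ioo 0 L, 0 < f s)
    (hsym : ∀ s ∈ Ioo 0 L, f (L - s) = f s) (hD : 0 < D)
    (hexp : (fun h => f (L / 2 + h) - f (L / 2) + D * |h| ^ p) =o[𝓝 0] fun h => |h| ^ p) :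
    (fun n : ℕ => meanHittingTime (fun s => f s ^ (n - 1)) L) ~[atTop] fun n =>
      p * crossingConstant p * ((f (L / 2) / D) ^ (1 / p)) ^ 2
        / ((n : ℝ) ^ (2 / p) * Real.Gamma (1 / p)) := by
  have hM : 0 < f (L / 2) := hpos _ ⟨by linarith, by linarith⟩
  have hpeak := isFlatProfile_peakProfile hL (by linarith) hconc hpos hsym hD hexp
  have hcross := (hpeak.isEquivalent_meanCrossingTime_pow hp).comp_tendsto
    (tendsto_sub_atTop_nat 1)
  have hpred := (IsEquivalent.refl (l := atTop)
      (u := fun _ : ℕ => p * crossingConstant p * ((f (L / 2) / D) ^ (1 / p)) ^ 2)).div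
    ((isEquivalent_natCast_pred_rpow (2 / p)).mul
      (IsEquivalent.refl (u := fun _ => Real.Gamma (1 / p))))
  refine (hcross.trans hpred).congr_left ?_
  filter_upwards [eventually_ge_atTop 2] with n hn
  exact (meanHittingTime_pow_eq_meanCrossingTime_peakProfile hL.le hM.ne' (by lia)
    (hpeak.integrable_pow (by linarith) (by lia))).symm

/-- Degenerate case `k ≥ 2`: `E[τₙ] ~ 2k C(2k) C(f,2k)² / (n^{1/k} Γ(1/(2k)))`. -/
theorem mean_asymptotic_degenerate
    (L : ℝ) (hL : 0 < L) (k : ℕ) (hk : 2 ≤ k) (f : ℝ → ℝ)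
    (hf : ContDiff ℝ (2 * k + 1 : ℕ) f)
    (hpos : ∀ s ∈ Set.Ioo 0 L, 0 < f s)
    (hasymp : Asymptotics.IsEquivalent (𝓝[>] (0:ℝ)) f id)
    (hsym : ∀ s, f (L - s) = f s)
    (hf' : ∀ s ∈ Set.Ico 0 (L / 2), 0 < deriv f s)
    (hf'' : ∀ s ∈ Set.Icc 0 L, s ≠ L / 2 → deriv (deriv f) s ≤ 0)
    (hexp : (fun h : ℝ => f (L / 2 + h) - f (L / 2)
        - iteratedDeriv (2 * k) f (L / 2) / ((2 * k).factorial : ℝ) * h ^ (2 * k))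
      =o[𝓝 (0:ℝ)] (fun h : ℝ => h ^ (2 * k)))
    (hneg : iteratedDeriv (2 * k) f (L / 2) < 0)
    (I : ℕ → ℝ → ℝ)
    (hI : ∀ n r, I n r = ∫ s in (0:ℝ)..r, f s ^ (n - 1))
    {Ω : ℕ → Type*} [∀ n, MeasureSpace (Ω n)]
    [∀ n, IsProbabilityMeasure (volume : Measure (Ω n))]
    (τ : ∀ n, Ω n → ℝ)
    (hE : ∀ n, 2 ≤ n →
      (∫ ω, τ n ω) = ∫ s in (0:ℝ)..L, I n s / f s ^ (n - 1) * ((I n L - I n s) / I n L))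
    (Cf C2k : ℝ) (h1 : ℝ → ℝ)
    (hCf : Cf = (((2 * k).factorial : ℝ) * f (L / 2)
        / |iteratedDeriv (2 * k) f (L / 2)|) ^ ((1 : ℝ) / (2 * k : ℝ)))
    (hh1 : ∀ x, h1 x = ∫ a in Set.Iic x, Real.exp (-(a ^ (2 * k))))
    (hC2k : C2k = ∫ a in Set.Ioi (0:ℝ), h1 a * h1 (-a) * Real.exp (a ^ (2 * k))) :
    Asymptotics.IsEquivalent atTop
      (fun n : ℕ => ∫ ω, τ n ω)
      (fun n : ℕ => 2 * k * C2k * Cf ^ 2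
        / ((n : ℝ) ^ ((1 : ℝ) / (k : ℝ)) * Real.Gamma (1 / (2 * k : ℝ)))) := by
  have hD : 0 < |iteratedDeriv (2 * k) f (L / 2)| / ((2 * k).factorial : ℝ) :=
    div_pos (abs_pos.2 hneg.ne) (by positivity)
  have hconc : ConcaveOn ℝ (Ioo 0 L) f := concaveOn_of_eventually_cofinite_deriv2_nonpos
    (convex_Ioo 0 L) (hf.of_le (by norm_cast; lia))
    ((eventually_cofinite_ne (L / 2)).mono fun s hs hmem => hf'' s (Ioo_subset_Icc_self hmem) hs)
  have hgeneral := mean_asymptotic_degenerate_general (p := 2 * k) hL (by norm_cast; lia)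
    hconc hpos (fun s _ => hsym s) hD (by
      simpa only [abs_rpow_two_mul_natCast, abs_of_neg hneg, neg_div, neg_mul, ← sub_eq_add_neg]
        using hexp)
  have hC : crossingConstant (2 * k) = C2k := by
    simp only [hC2k, hh1, crossingConstant_two_mul_natCast, expPowMass_two_mul_natCast]
  have hA : (f (L / 2) / (|iteratedDeriv (2 * k) f (L / 2)| / ((2 * k).factorial : ℝ)))
      ^ (1 / (2 * k : ℝ)) = Cf := by
    rw [hCf, div_div_eq_mul_div, mul_comm (f (L / 2))]
  have hexponent : (2 / (2 * k) : ℝ) = 1 / k := by field_simp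
  rw [hC, hA, hexponent] at hgeneral
  refine hgeneral.congr_left ?_
  filter_upwards [eventually_ge_atTop 2] with n hn
  simp only [hE n hn, meanHittingTime, hI]
end
end
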